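/- arXiv:0711.0560 — 3 statements merged into one kernel-verified Lean document; each statement's English description precedes it below -/
import Mathlib

section
/- Bilinear convolution estimate. For each α ∈ (1,2) there exists a constant c(α) such that for all continuous vector fields v, w : ℝ³ → ℝ³ with ‖v‖_α < ∞ and ‖w‖_α < ∞, the function u : ℝ³ → ℝ³ defined componentwise by u_i(x) = ∫_{ℝ³} ∂_k G_ij(x−y) v_j(y) w_k(y) dy (summation over j,k = 1,2,3) is well defined (the integral converges absolutely for every x) and satisfies ‖u‖_α ≤ c(α) ‖v‖_α ‖w‖_α. -/
open MeasureTheory Real Metric Filter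

noncomputable section

abbrev E3 : Type := EuclideanSpace ℝ (Fin 3)

def ee (j : Fin 3) : E3 := EuclideanSpace.single j 1

/-- the Green (Oseen) tensor of the Stokes operator -/
def G (i j : Fin 3) (x : E3) : ℝ :=
  (1 / (8 * π)) * ((if i = j then 1 else 0) / ‖x‖ + x i * x j / ‖x‖ ^ 3)

/-- `∂ₖ G_{ij}` -/
def dG (i j k : Fin 3) (x : E3) : ℝ := fderiv ℝ (G i j) x (ee k)

/-- the norm of the space `X_α` -/
def Xnorm (α : ℝ) (v : E3 → E3) : ℝ := ⨆ x : E3, (1 + ‖x‖) ^ α * ‖v x‖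

theorem contDiffAt_G (i j : Fin 3) {x : E3} (hx : x ≠ 0) : ContDiffAt ℝ 1 (G i j) x := by
  have hn : ContDiffAt ℝ 1 (fun y : E3 => ‖y‖) x := contDiffAt_norm ℝ hx
  have hc (l : Fin 3) : ContDiffAt ℝ 1 (fun y : E3 => y l) x :=
    (EuclideanSpace.proj (𝕜 := ℝ) l).contDiff.contDiffAt
  have hx0 : ‖x‖ ≠ 0 := norm_ne_zero_iff.mpr hx
  exact contDiffAt_const.mul ((contDiffAt_const.div hn hx0).add
    (((hc i).mul (hc j)).div (hn.pow 3) (pow_ne_zero 3 hx0)))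

theorem G_smul (i j : Fin 3) {r : ℝ} (hr : 0 < r) (x : E3) : G i j (r • x) = r⁻¹ * G i j x := by
  rcases eq_or_ne x 0 with rfl | hx
  · simp [G]
  have hx0 : ‖x‖ ≠ 0 := norm_ne_zero_iff.mpr hx
  simp only [G, norm_smul, Real.norm_of_nonneg hr.le, PiLp.smul_apply, smul_eq_mul]
  field_simp

theorem dG_smul (i j k : Fin 3) {r : ℝ} (hr : 0 < r) (x : E3) :
    dG i j k (r • x) = (r ^ 2)⁻¹ * dG i j k x := by
  have h1 : fderiv ℝ (G i j <| r • ·) x = r • fderiv ℝ (G i j) (r • x) := fderiv_comp_smul r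
  have h2 : (fun y => G i j (r • y)) = r⁻¹ • G i j := by
    funext y
    exact G_smul i j hr y
  rw [h2, fderiv_const_smul_field] at h1
  have h3 := congrArg (fun L : E3 →L[ℝ] ℝ => r⁻¹ * L (ee k)) h1
  simp only [Pi.smul_apply, smul_apply, smul_eq_mul, inv_mul_cancel_left₀ hr.ne'] at h3
  rw [dG, ← h3, dG]
  ring

theorem continuousOn_dG (i j k : Fin 3) : ContinuousOn (dG i j k) {0}ᶜ := by
  intro x hx
  have h := (contDiffAt_G i j hx).continuousAt_fderiv (by norm_num)
  exact (h.clm_apply continuousAt_const).continuousWithinAt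

theorem exists_abs_dG_le :
    ∃ C : ℝ, 0 ≤ C ∧ ∀ (i j k : Fin 3) (x : E3), x ≠ 0 → |dG i j k x| ≤ C * (‖x‖ ^ 2)⁻¹ := by
  have hsphere (p : Fin 3 × Fin 3 × Fin 3) :
      ∃ C : ℝ, ∀ x ∈ sphere (0 : E3) 1, ‖dG p.1 p.2.1 p.2.2 x‖ ≤ C :=
    (isCompact_sphere _ _).exists_bound_of_continuousOn
      ((continuousOn_dG _ _ _).mono fun x hx => ne_zero_of_mem_unit_sphere ⟨x, hx⟩)
  choose C hC using hsphere
  refine ⟨∑ p, |C p|, by positivity, fun i j k x hx => ?_⟩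
  have hx0 : 0 < ‖x‖ := norm_pos_iff.mpr hx
  have hmem : ‖x‖⁻¹ • x ∈ sphere (0 : E3) 1 := by
    simp [norm_smul, hx0.ne']
  have hb : |dG i j k (‖x‖⁻¹ • x)| ≤ ∑ p, |C p| :=
    (hC (i, j, k) _ hmem).trans ((le_abs_self _).trans
      (Finset.single_le_sum (f := fun p => |C p|) (fun _ _ => abs_nonneg _)
        (Finset.mem_univ (i, j, k))))
  have hs : x = ‖x‖ • ‖x‖⁻¹ • x := by rw [smul_inv_smul₀ hx0.ne']
  have he : |dG i j k x| = (‖x‖ ^ 2)⁻¹ * |dG i j k (‖x‖⁻¹ • x)| := by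
    conv_lhs => rw [hs, dG_smul i j k hx0, abs_mul, abs_of_pos (by positivity)]
  rw [he, mul_comm]
  gcongr

/-- The profile `r ^ (-β)` near the origin, `r ^ (-β - 2)` at infinity. -/
def profile (β r : ℝ) : ℝ := if r ≤ 1 then r ^ (-β) else r ^ (-β - 2)

theorem profile_nonneg (β : ℝ) {r : ℝ} (hr : 0 ≤ r) : 0 ≤ profile β r := by
  unfold profile
  split_ifs <;> positivity

theorem integrable_profile_norm {β : ℝ} (h1 : 1 < β) (h3 : β < 3) :
    Integrable (fun x : E3 => profile β ‖x‖) := by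
  rw [integrable_fun_norm_addHaar, ← Set.Ioc_union_Ioi_eq_Ioi zero_le_one]
  simp only [finrank_euclideanSpace, Fintype.card_fin, smul_eq_mul]
  refine IntegrableOn.union ?_ ?_
  · have h : IntegrableOn (fun r : ℝ => r ^ (2 - β)) (Set.Ioc 0 1) :=
      (intervalIntegrable_iff_integrableOn_Ioc_of_le zero_le_one).mp
        (intervalIntegral.intervalIntegrable_rpow' (by linarith))
    refine h.congr_fun (fun r hr => ?_) measurableSet_Ioc
    simp only [profile, if_pos hr.2]
    rw [← Real.rpow_natCast, ← Real.rpow_add hr.1]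
    norm_num [sub_eq_add_neg]
  · have h : IntegrableOn (fun r : ℝ => r ^ (-β)) (Set.Ioi 1) :=
      integrableOn_Ioi_rpow_of_lt (by linarith) zero_lt_one
    refine h.congr_fun (fun r hr => ?_) measurableSet_Ioi
    simp only [profile, if_neg (not_le.mpr (Set.mem_Ioi.mp hr))]
    rw [← Real.rpow_natCast, ← Real.rpow_add (zero_lt_one.trans hr)]
    norm_num

theorem riesz_mul_weight_le {β : ℝ} (h2 : 2 ≤ β) (h3 : β ≤ 3) {x y : E3} (hy : y ≠ 0)
    (hxy : x - y ≠ 0) :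
    (‖x - y‖ ^ 2)⁻¹ * (1 + ‖y‖) ^ (-β) ≤ 9 * (1 + ‖x‖) ^ (-β - 2) *
      (profile β ‖(1 + ‖x‖)⁻¹ • (x - y)‖ + profile β ‖(1 + ‖x‖)⁻¹ • y‖) := by
  have hR : 0 < 1 + ‖x‖ := by positivity
  have hxR : ‖x‖ = (1 + ‖x‖) - 1 := by ring
  have htri : ‖x‖ ≤ ‖x - y‖ + ‖y‖ := by simpa using norm_add_le (x - y) y
  have htri' : ‖y‖ ≤ ‖x - y‖ + ‖x‖ := by
    simpa [norm_sub_rev, add_comm] using norm_le_norm_sub_add y x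
  have hy0 : 0 < ‖y‖ := norm_pos_iff.mpr hy
  have hd0 : 0 < ‖x - y‖ := norm_pos_iff.mpr hxy
  simp only [norm_smul, norm_inv, Real.norm_of_nonneg hR.le]
  generalize 1 + ‖x‖ = R at *
  generalize ‖x - y‖ = d at *
  generalize ‖y‖ = s at *
  rw [hxR] at htri htri'
  have hsplit : R ^ (-β - 2) = R ^ (-β) * (R ^ 2)⁻¹ := by
    rw [Real.rpow_sub hR, div_eq_mul_inv]
    norm_num
  rcases le_or_gt d (R / 2) with hd | hd
  · have hdR : R⁻¹ * d ≤ 1 := by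
      rw [inv_mul_le_iff₀ hR]
      linarith
    have hA : (1 + s) ^ (-β) ≤ 9 * R ^ (-β) := by
      calc (1 + s) ^ (-β) ≤ (R * 2⁻¹) ^ (-β) :=
            Real.rpow_le_rpow_of_nonpos (by positivity) (by linarith) (by linarith)
        _ = R ^ (-β) * 2 ^ β := by
            rw [Real.mul_rpow hR.le (by norm_num), Real.inv_rpow (by norm_num),
              ← Real.rpow_neg (by norm_num), neg_neg]
        _ ≤ R ^ (-β) * 9 := by
            gcongr
            calc (2 : ℝ) ^ β ≤ 2 ^ (3 : ℝ) := Real.rpow_le_rpow_of_exponent_le (by norm_num) h3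
              _ ≤ 9 := by norm_num
        _ = 9 * R ^ (-β) := mul_comm _ _
    have hB : (d ^ 2)⁻¹ ≤ (R ^ 2)⁻¹ * profile β (R⁻¹ * d) := by
      have : ((R⁻¹ * d) ^ 2)⁻¹ ≤ profile β (R⁻¹ * d) := by
        rw [profile, if_pos hdR, ← Real.rpow_natCast, ← Real.rpow_neg (by positivity)]
        exact Real.rpow_le_rpow_of_exponent_ge (by positivity) hdR (by push_cast; linarith)
      calc (d ^ 2)⁻¹ = (R ^ 2)⁻¹ * ((R⁻¹ * d) ^ 2)⁻¹ := by field_simp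
        _ ≤ _ := by gcongr
    calc (d ^ 2)⁻¹ * (1 + s) ^ (-β)
        ≤ ((R ^ 2)⁻¹ * profile β (R⁻¹ * d)) * (9 * R ^ (-β)) :=
          mul_le_mul hB hA (by positivity) (le_trans (by positivity) hB)
      _ = 9 * R ^ (-β - 2) * (profile β (R⁻¹ * d) + 0) := by rw [hsplit]; ring
      _ ≤ _ := by
          gcongr
          exact profile_nonneg β (by positivity)
  · have hA : (1 + s) ^ (-β) ≤ s ^ (-β) :=
      Real.rpow_le_rpow_of_nonpos hy0 (by linarith) (by linarith)
    have hsR : s = R * (R⁻¹ * s) := by field_simp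
    have hC : (d ^ 2)⁻¹ * s ^ (-β) ≤ 9 * R ^ (-β - 2) * profile β (R⁻¹ * s) := by
      have hpow : s ^ (-β) = R ^ (-β) * (R⁻¹ * s) ^ (-β) := by
        rw [← Real.mul_rpow hR.le (by positivity), ← hsR]
      by_cases h : R⁻¹ * s ≤ 1
      · have : (d ^ 2)⁻¹ ≤ 9 * (R ^ 2)⁻¹ := by
          rw [inv_le_comm₀ (by positivity) (by positivity), mul_inv, inv_inv]
          nlinarith
        rw [profile, if_pos h, hsplit]
        calc (d ^ 2)⁻¹ * s ^ (-β) ≤ 9 * (R ^ 2)⁻¹ * (R ^ (-β) * (R⁻¹ * s) ^ (-β)) := by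
              rw [hpow]
              gcongr
          _ = _ := by ring
      · have : (d ^ 2)⁻¹ ≤ 9 * (s ^ 2)⁻¹ := by
          rw [inv_le_comm₀ (by positivity) (by positivity), mul_inv, inv_inv]
          nlinarith
        have hsplit' : (R⁻¹ * s) ^ (-β - 2) = (R⁻¹ * s) ^ (-β) * ((R⁻¹ * s) ^ 2)⁻¹ := by
          rw [Real.rpow_sub (by positivity), div_eq_mul_inv]
          norm_num
        rw [profile, if_neg h, hsplit, hsplit']
        calc (d ^ 2)⁻¹ * s ^ (-β) ≤ 9 * (s ^ 2)⁻¹ * (R ^ (-β) * (R⁻¹ * s) ^ (-β)) := by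
              rw [hpow]
              gcongr
          _ = _ := by field_simp
    calc (d ^ 2)⁻¹ * (1 + s) ^ (-β) ≤ (d ^ 2)⁻¹ * s ^ (-β) := by gcongr
      _ ≤ 9 * R ^ (-β - 2) * (0 + profile β (R⁻¹ * s)) := by rwa [zero_add]
      _ ≤ _ := by
          gcongr
          exact profile_nonneg β (by positivity)

/-- The integrable majorant of the Riesz kernel centred at `x` against the weight
`(1 + ‖y‖) ^ (-β)`. -/
def majorant (β : ℝ) (x y : E3) : ℝ :=
  9 * (1 + ‖x‖) ^ (-β - 2) *
    (profile β ‖(1 + ‖x‖)⁻¹ • (x - y)‖ + profile β ‖(1 + ‖x‖)⁻¹ • y‖)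

theorem integrable_majorant {β : ℝ} (h1 : 1 < β) (h3 : β < 3) (x : E3) :
    Integrable (majorant β x) := by
  have hR : (1 + ‖x‖)⁻¹ ≠ 0 := by positivity
  have h := (integrable_profile_norm h1 h3).comp_smul hR
  exact ((h.comp_sub_left x).add h).const_mul _

theorem integral_majorant {β : ℝ} (h1 : 1 < β) (h3 : β < 3) (x : E3) :
    ∫ y, majorant β x y = 18 * (∫ z : E3, profile β ‖z‖) * (1 + ‖x‖) ^ (1 - β) := by
  have hR : 0 < 1 + ‖x‖ := by positivity
  have h := (integrable_profile_norm h1 h3).comp_smul (inv_ne_zero hR.ne')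
  have hpow : (1 + ‖x‖) ^ (-β - 2) * (1 + ‖x‖) ^ 3 = (1 + ‖x‖) ^ (1 - β) := by
    rw [← Real.rpow_natCast, ← Real.rpow_add hR]
    congr 1
    push_cast
    ring
  simp only [majorant]
  rw [integral_const_mul, integral_add (h.comp_sub_left x) h,
    integral_sub_left_eq_self (fun y : E3 => profile β ‖(1 + ‖x‖)⁻¹ • y‖) volume x,
    Measure.integral_comp_inv_smul_of_nonneg volume (fun z : E3 => profile β ‖z‖) hR.le,
    ← hpow, finrank_euclideanSpace, Fintype.card_fin, smul_eq_mul]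
  ring

theorem norm_le_Xnorm_mul_rpow {α : ℝ} {v : E3 → E3}
    (hv : BddAbove (Set.range fun x : E3 => (1 + ‖x‖) ^ α * ‖v x‖)) (y : E3) :
    ‖v y‖ ≤ Xnorm α v * (1 + ‖y‖) ^ (-α) := by
  have hy : 0 < 1 + ‖y‖ := by positivity
  rw [Real.rpow_neg hy.le, ← div_eq_mul_inv, le_div_iff₀ (by positivity), mul_comm]
  exact le_ciSup hv y

theorem Xnorm_nonneg (α : ℝ) (v : E3 → E3) : 0 ≤ Xnorm α v :=
  Real.iSup_nonneg fun _ => by positivity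

theorem E3.norm_le_of_abs_le {a : E3} {B : ℝ} (h : ∀ i, |a i| ≤ B) : ‖a‖ ≤ 3 * B := by
  have hB : 0 ≤ B := (abs_nonneg _).trans (h 0)
  have hsq (i : Fin 3) : a i ^ 2 ≤ B ^ 2 := sq_le_sq' (abs_le.mp (h i)).1 (abs_le.mp (h i)).2
  rw [EuclideanSpace.norm_eq, Real.sqrt_le_left (by positivity)]
  simp only [Fin.sum_univ_three, Real.norm_eq_abs, sq_abs]
  nlinarith [hsq 0, hsq 1, hsq 2]

theorem aestronglyMeasurable_integrand {v w : E3 → E3} (hv : Continuous v) (hw : Continuous w)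
    (x : E3) (i : Fin 3) :
    AEStronglyMeasurable (fun y : E3 => ∑ j, ∑ k, dG i j k (x - y) * v y j * w y k) := by
  have hd (j k : Fin 3) : Measurable (dG i j k) := measurable_fderiv_apply_const ℝ _ _
  have hvj (j : Fin 3) : Measurable fun y => v y j :=
    ((EuclideanSpace.proj (𝕜 := ℝ) j).continuous.comp hv).measurable
  have hwk (k : Fin 3) : Measurable fun y => w y k :=
    ((EuclideanSpace.proj (𝕜 := ℝ) k).continuous.comp hw).measurable
  refine Measurable.aestronglyMeasurable ?_
  exact Finset.measurable_fun_sum _ fun j _ => Finset.measurable_fun_sum _ fun k _ =>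
    (((hd j k).comp (measurable_const.sub measurable_id)).mul (hvj j)).mul (hwk k)

theorem abs_integrand_le {α C : ℝ} (hα1 : 1 ≤ α) (hα2 : α ≤ 2) (hC0 : 0 ≤ C)
    (hC : ∀ (i j k : Fin 3) (x : E3), x ≠ 0 → |dG i j k x| ≤ C * (‖x‖ ^ 2)⁻¹)
    {v w : E3 → E3} (hv : BddAbove (Set.range fun x : E3 => (1 + ‖x‖) ^ α * ‖v x‖))
    (hw : BddAbove (Set.range fun x : E3 => (1 + ‖x‖) ^ α * ‖w x‖)) (i : Fin 3) {x y : E3}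
    (hy : y ≠ 0) (hxy : x - y ≠ 0) :
    ‖∑ j, ∑ k, dG i j k (x - y) * v y j * w y k‖ ≤
      9 * C * Xnorm α v * Xnorm α w * majorant (α + 1) x y := by
  have hy1 : 0 < 1 + ‖y‖ := by positivity
  have hV := Xnorm_nonneg α v
  have hW := Xnorm_nonneg α w
  have hweight : (1 + ‖y‖) ^ (-α) * (1 + ‖y‖) ^ (-α) ≤ (1 + ‖y‖) ^ (-(α + 1)) := by
    rw [← Real.rpow_add hy1]
    exact Real.rpow_le_rpow_of_exponent_le (by linarith [norm_nonneg y]) (by linarith)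
  have hterm (j k : Fin 3) : ‖dG i j k (x - y) * v y j * w y k‖ ≤
      C * Xnorm α v * Xnorm α w * majorant (α + 1) x y := by
    have hvj : ‖v y j‖ ≤ Xnorm α v * (1 + ‖y‖) ^ (-α) :=
      (PiLp.norm_apply_le (v y) j).trans (norm_le_Xnorm_mul_rpow hv y)
    have hwk : ‖w y k‖ ≤ Xnorm α w * (1 + ‖y‖) ^ (-α) :=
      (PiLp.norm_apply_le (w y) k).trans (norm_le_Xnorm_mul_rpow hw y)
    have hd : ‖dG i j k (x - y)‖ ≤ C * (‖x - y‖ ^ 2)⁻¹ := hC i j k _ hxy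
    rw [norm_mul, norm_mul]
    calc ‖dG i j k (x - y)‖ * ‖v y j‖ * ‖w y k‖
        ≤ C * (‖x - y‖ ^ 2)⁻¹ * (Xnorm α v * (1 + ‖y‖) ^ (-α)) *
            (Xnorm α w * (1 + ‖y‖) ^ (-α)) := by gcongr
      _ = C * Xnorm α v * Xnorm α w *
            ((‖x - y‖ ^ 2)⁻¹ * ((1 + ‖y‖) ^ (-α) * (1 + ‖y‖) ^ (-α))) := by ring
      _ ≤ C * Xnorm α v * Xnorm α w * ((‖x - y‖ ^ 2)⁻¹ * (1 + ‖y‖) ^ (-(α + 1))) := by gcongr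
      _ ≤ C * Xnorm α v * Xnorm α w * majorant (α + 1) x y := by
          gcongr
          exact riesz_mul_weight_le (by linarith) (by linarith) hy hxy
  calc ‖∑ j, ∑ k, dG i j k (x - y) * v y j * w y k‖
      ≤ ∑ _j : Fin 3, ∑ _k : Fin 3, C * Xnorm α v * Xnorm α w * majorant (α + 1) x y :=
        norm_sum_le_of_le _ fun j _ => norm_sum_le_of_le _ fun k _ => hterm j k
    _ = _ := by
        simp only [Finset.sum_const, Finset.card_univ, Fintype.card_fin, nsmul_eq_mul]
        push_cast
        ring

theorem bilinear_convolution_estimate (α : ℝ) (hα1 : 1 < α) (hα2 : α < 2) :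
    ∃ c : ℝ, ∀ v w : E3 → E3, Continuous v → Continuous w →
      BddAbove (Set.range fun x : E3 => (1 + ‖x‖) ^ α * ‖v x‖) →
      BddAbove (Set.range fun x : E3 => (1 + ‖x‖) ^ α * ‖w x‖) →
      (∀ (x : E3) (i : Fin 3),
        Integrable (fun y : E3 => ∑ j, ∑ k, dG i j k (x - y) * v y j * w y k)) ∧
      (∀ u : E3 → E3,
        (∀ (x : E3) (i : Fin 3),
          u x i = ∫ y : E3, ∑ j, ∑ k, dG i j k (x - y) * v y j * w y k) →
        Xnorm α u ≤ c * Xnorm α v * Xnorm α w) := by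
  obtain ⟨C, hC0, hC⟩ := exists_abs_dG_le
  refine ⟨3 * (9 * C * (18 * ∫ z : E3, profile (α + 1) ‖z‖)), fun v w hvc hwc hv hw => ?_⟩
  have hbound (x : E3) (i : Fin 3) :
      ∀ᵐ y : E3, ‖∑ j, ∑ k, dG i j k (x - y) * v y j * w y k‖ ≤
        9 * C * Xnorm α v * Xnorm α w * majorant (α + 1) x y := by
    filter_upwards [Measure.ae_ne volume (0 : E3), Measure.ae_ne volume x] with y hy hxy
    exact abs_integrand_le hα1.le hα2.le hC0 hC hv hw i hy (sub_ne_zero.mpr hxy.symm)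
  have hmaj (x : E3) : Integrable fun y =>
      9 * C * Xnorm α v * Xnorm α w * majorant (α + 1) x y :=
    (integrable_majorant (by linarith) (by linarith) x).const_mul _
  refine ⟨fun x i => (hmaj x).mono' (aestronglyMeasurable_integrand hvc hwc x i) (hbound x i),
    fun u hu => ciSup_le fun x => ?_⟩
  have hx : 0 < 1 + ‖x‖ := by positivity
  have hux (i : Fin 3) : |u x i| ≤ 9 * C * Xnorm α v * Xnorm α w *
      (18 * (∫ z : E3, profile (α + 1) ‖z‖) * (1 + ‖x‖) ^ (1 - (α + 1))) := by
    rw [hu x i, ← integral_majorant (by linarith) (by linarith) x, ← integral_const_mul]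
    exact norm_integral_le_of_norm_le (hmaj x) (hbound x i)
  have hpow : (1 + ‖x‖) ^ α * (1 + ‖x‖) ^ (1 - (α + 1)) = 1 := by
    rw [← Real.rpow_add hx]
    simp
  calc (1 + ‖x‖) ^ α * ‖u x‖
      ≤ (1 + ‖x‖) ^ α * (3 * (9 * C * Xnorm α v * Xnorm α w *
          (18 * (∫ z : E3, profile (α + 1) ‖z‖) * (1 + ‖x‖) ^ (1 - (α + 1))))) := by
        gcongr
        exact E3.norm_le_of_abs_le hux
    _ = 3 * (9 * C * (18 * ∫ z : E3, profile (α + 1) ‖z‖)) * Xnorm α v * Xnorm α w *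
          ((1 + ‖x‖) ^ α * (1 + ‖x‖) ^ (1 - (α + 1))) := by ring
    _ = 3 * (9 * C * (18 * ∫ z : E3, profile (α + 1) ‖z‖)) * Xnorm α v * Xnorm α w := by
        rw [hpow, mul_one]
end
end

section
/- Key integral estimate. For each α ∈ (1,2) and each β ∈ {1, α} there exists a constant c(α) such that for every x ∈ ℝ³, the integral I(x) = ∫_{ℝ³} |x−y|^{−2} (1+|y|)^{−(α+β)} dy is finite and satisfies (1+|x|)^α I(x) ≤ c(α). -/
open MeasureTheory Real Metric Filter

noncomputable section

/-- The radial weight `‖z‖ ^ (-a) * (1 + ‖z‖) ^ (-b)` is integrable as soon as the singularity at the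
origin is weaker, and the decay at infinity stronger, than the dimension. -/
theorem integrable_norm_rpow_mul_one_add_norm_rpow {E : Type*} [NormedAddCommGroup E]
    [NormedSpace ℝ E] [FiniteDimensional ℝ E] [Nontrivial E] [MeasurableSpace E] [BorelSpace E]
    (μ : Measure E) [μ.IsAddHaarMeasure] {a b : ℝ} (ha : a < Module.finrank ℝ E)
    (hab : Module.finrank ℝ E < a + b) :
    Integrable (fun z : E => ‖z‖ ^ (-a) * (1 + ‖z‖) ^ (-b)) μ := by
  have hd : 1 ≤ Module.finrank ℝ E := Module.finrank_pos
  rw [integrable_fun_norm_addHaar (μ := μ) (f := fun t : ℝ => t ^ (-a) * (1 + t) ^ (-b)),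
    ← Set.Ioc_union_Ioi_eq_Ioi zero_le_one]
  set d := Module.finrank ℝ E
  have hmeas : Measurable fun t : ℝ => t ^ (d - 1) • (t ^ (-a) * (1 + t) ^ (-b)) := by
    simp only [smul_eq_mul]
    fun_prop
  have hpow : ∀ t : ℝ, 0 < t → t ^ (d - 1) * t ^ (-a) = t ^ (d - 1 - a : ℝ) := fun t ht => by
    rw [← rpow_natCast, ← rpow_add ht, Nat.cast_sub hd, Nat.cast_one, ← sub_eq_add_neg]
  refine IntegrableOn.union ?_ ?_
  · have h : IntegrableOn (fun t : ℝ => t ^ (d - 1 - a : ℝ)) (Set.Ioc 0 1) :=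
      (intervalIntegrable_iff_integrableOn_Ioc_of_le zero_le_one).1
        (intervalIntegral.intervalIntegrable_rpow' (by linarith))
    refine Integrable.mono' h hmeas.aestronglyMeasurable ?_
    filter_upwards [ae_restrict_mem measurableSet_Ioc] with t ht
    have ht0 : 0 < t := ht.1
    rw [norm_of_nonneg (by positivity), smul_eq_mul, ← mul_assoc, hpow t ht0]
    exact mul_le_of_le_one_right (by positivity)
      (rpow_le_one_of_one_le_of_nonpos (by linarith) (by linarith))
  · have h : IntegrableOn (fun t : ℝ => t ^ (d - 1 - a - b : ℝ)) (Set.Ioi 1) :=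
      integrableOn_Ioi_rpow_of_lt (by linarith) one_pos
    refine Integrable.mono' h hmeas.aestronglyMeasurable ?_
    filter_upwards [ae_restrict_mem measurableSet_Ioi] with t ht
    have ht0 : 0 < t := one_pos.trans ht
    rw [norm_of_nonneg (by positivity), smul_eq_mul, ← mul_assoc, hpow t ht0,
      sub_eq_add_neg _ b, rpow_add ht0]
    gcongr ?_ * ?_
    exact rpow_le_rpow_of_nonpos ht0 (by linarith) (by linarith)

theorem div_rpow_mul_one_add_div_rpow {r s : ℝ} (hr : 0 < r) (hs : 0 ≤ s) (a b : ℝ) :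
    (s / r) ^ (-a) * (1 + s / r) ^ (-b) = r ^ (a + b) * (s ^ (-a) * (r + s) ^ (-b)) := by
  have h : 1 + s / r = (r + s) / r := by field_simp
  rw [h, div_rpow hs hr.le, div_rpow (by positivity) hr.le, rpow_add hr, rpow_neg hr.le,
    rpow_neg hr.le]
  field_simp

theorem rpow_neg_le_of_le_mul {c u v p : ℝ} (hc : 0 < c) (hu : 0 < u) (h : u ≤ c * v)
    (hp : 0 ≤ p) : v ^ (-p) ≤ c ^ p * u ^ (-p) := by
  have hv : 0 < v := pos_of_mul_pos_right (hu.trans_le h) hc.le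
  calc v ^ (-p) = c ^ p * (c * v) ^ (-p) := by
        rw [mul_rpow hc.le hv.le, ← mul_assoc, ← rpow_add hc, add_neg_cancel, rpow_zero, one_mul]
    _ ≤ c ^ p * u ^ (-p) := by
        gcongr ?_ * ?_
        exact rpow_le_rpow_of_nonpos hu h (by linarith)

/-- A product of powers of the distances `s` to a point and `t` to the origin is dominated by a sum of
two terms, each depending on only one of the distances, rescaled by `r`. -/
theorem rpow_mul_one_add_rpow_le {a b r s t : ℝ} (ha : 0 ≤ a) (hb : 0 ≤ b) (hr : 0 < r)
    (hs : 0 ≤ s) (ht : 0 < t) (hrst : r ≤ s + (1 + t)) (htrs : t ≤ r + s) :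
    s ^ (-a) * (1 + t) ^ (-b) ≤ r ^ (-(a + b)) *
      (3 ^ b * ((s / r) ^ (-a) * (1 + s / r) ^ (-b)) +
        5 ^ a * ((t / r) ^ (-b) * (1 + t / r) ^ (-a))) := by
  have hr1 : r ^ (-(a + b)) * r ^ (a + b) = 1 := by rw [← rpow_add hr]; simp
  rw [div_rpow_mul_one_add_div_rpow hr hs, div_rpow_mul_one_add_div_rpow hr ht.le, add_comm b a]
  suffices s ^ (-a) * (1 + t) ^ (-b) ≤
      3 ^ b * (s ^ (-a) * (r + s) ^ (-b)) + 5 ^ a * (t ^ (-b) * (r + t) ^ (-a)) by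
    refine this.trans_eq ?_
    linear_combination (-(3 ^ b * (s ^ (-a) * (r + s) ^ (-b)) +
      5 ^ a * (t ^ (-b) * (r + t) ^ (-a)))) * hr1
  rcases le_total s (r / 2) with h | h
  · have h1 : (1 + t) ^ (-b) ≤ 3 ^ b * (r + s) ^ (-b) :=
      rpow_neg_le_of_le_mul (by norm_num) (by linarith) (by linarith) hb
    calc s ^ (-a) * (1 + t) ^ (-b) ≤ s ^ (-a) * (3 ^ b * (r + s) ^ (-b)) := by gcongr
      _ = 3 ^ b * (s ^ (-a) * (r + s) ^ (-b)) := by ring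
      _ ≤ _ := le_add_of_nonneg_right (by positivity)
  · have h1 : s ^ (-a) ≤ 5 ^ a * (r + t) ^ (-a) :=
      rpow_neg_le_of_le_mul (by norm_num) (by linarith) (by linarith) ha
    have h2 : (1 + t) ^ (-b) ≤ t ^ (-b) :=
      rpow_le_rpow_of_nonpos ht (by linarith) (by linarith)
    calc s ^ (-a) * (1 + t) ^ (-b) ≤ (5 ^ a * (r + t) ^ (-a)) * t ^ (-b) := by gcongr
      _ = 5 ^ a * (t ^ (-b) * (r + t) ^ (-a)) := by ring
      _ ≤ _ := le_add_of_nonneg_left (by positivity)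

theorem key_integral_estimate (α : ℝ) (hα1 : 1 < α) (hα2 : α < 2) :
    ∃ c : ℝ, ∀ β : ℝ, (β = 1 ∨ β = α) → ∀ x : E3,
      Integrable (fun y : E3 => ‖x - y‖ ^ (-2 : ℝ) * (1 + ‖y‖) ^ (-(α + β))) ∧
      (1 + ‖x‖) ^ α * (∫ y : E3, ‖x - y‖ ^ (-2 : ℝ) * (1 + ‖y‖) ^ (-(α + β))) ≤ c := by
  have hdim : Module.finrank ℝ E3 = 3 := by simp
  set g₁ : E3 → ℝ := fun z => ‖z‖ ^ (-2 : ℝ) * (1 + ‖z‖) ^ (-(α + 1))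
  set g₂ : E3 → ℝ := fun z => ‖z‖ ^ (-(α + 1)) * (1 + ‖z‖) ^ (-2 : ℝ)
  have hg₁ : Integrable g₁ := integrable_norm_rpow_mul_one_add_norm_rpow volume
    (by rw [hdim]; norm_num) (by rw [hdim]; push_cast; linarith)
  have hg₂ : Integrable g₂ := integrable_norm_rpow_mul_one_add_norm_rpow volume
    (by rw [hdim]; push_cast; linarith) (by rw [hdim]; push_cast; linarith)
  refine ⟨3 ^ (α + 1) * (∫ z, g₁ z) + 5 ^ (2 : ℝ) * ∫ z, g₂ z, fun β hβ x => ?_⟩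
  have hβ1 : 1 ≤ β := by rcases hβ with rfl | rfl <;> linarith
  set r : ℝ := 1 + ‖x‖
  have hr : 0 < r := by positivity
  have hi₁ : Integrable fun y : E3 => 3 ^ (α + 1) * g₁ (r⁻¹ • (x - y)) :=
    ((hg₁.comp_smul (inv_ne_zero hr.ne')).comp_sub_left x).const_mul _
  have hi₂ : Integrable fun y : E3 => 5 ^ (2 : ℝ) * g₂ (r⁻¹ • y) :=
    (hg₂.comp_smul (inv_ne_zero hr.ne')).const_mul _
  have hG := (hi₁.add hi₂).const_mul (r ^ (-(2 + (α + 1))))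
  have hle : ∀ᵐ y : E3, ‖x - y‖ ^ (-2 : ℝ) * (1 + ‖y‖) ^ (-(α + β)) ≤
      r ^ (-(2 + (α + 1))) *
        (3 ^ (α + 1) * g₁ (r⁻¹ • (x - y)) + 5 ^ (2 : ℝ) * g₂ (r⁻¹ • y)) := by
    filter_upwards [Measure.ae_ne volume (0 : E3)] with y hy
    have hx : ‖x‖ ≤ ‖x - y‖ + ‖y‖ := by simpa using norm_add_le (x - y) y
    have hy' : ‖y‖ ≤ ‖x‖ + ‖x - y‖ := by simpa using norm_sub_le x (x - y)
    have hnorm : ∀ z : E3, ‖r⁻¹ • z‖ = ‖z‖ / r := fun z => by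
      rw [norm_smul, norm_inv, norm_of_nonneg hr.le, inv_mul_eq_div]
    have hmono : (1 + ‖y‖) ^ (-(α + β)) ≤ (1 + ‖y‖) ^ (-(α + 1)) :=
      rpow_le_rpow_of_exponent_le (by simp) (by linarith)
    refine (mul_le_mul_of_nonneg_left hmono (by positivity)).trans ?_
    simp only [g₁, g₂, hnorm]
    exact rpow_mul_one_add_rpow_le zero_le_two (by linarith) hr (norm_nonneg _)
      (norm_pos_iff.2 hy) (by linarith) (by linarith)
  have hint : Integrable fun y : E3 => ‖x - y‖ ^ (-2 : ℝ) * (1 + ‖y‖) ^ (-(α + β)) := by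
    refine hG.mono' (by fun_prop) ?_
    filter_upwards [hle] with y hy
    rwa [norm_of_nonneg (by positivity)]
  refine ⟨hint, ?_⟩
  have hscale : ∀ g : E3 → ℝ, ∫ y, g (r⁻¹ • y) = r ^ (3 : ℝ) * ∫ y, g y := fun g => by
    rw [Measure.integral_comp_inv_smul_of_nonneg volume g hr.le, hdim, smul_eq_mul]
    norm_cast
  have hsub : ∫ y, g₁ (r⁻¹ • (x - y)) = ∫ y, g₁ (r⁻¹ • y) :=
    integral_sub_left_eq_self (fun y => g₁ (r⁻¹ • y)) volume x
  have hpow : r ^ α * (r ^ (-(2 + (α + 1))) * r ^ (3 : ℝ)) = 1 := by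
    rw [← rpow_add hr, ← rpow_add hr,
      show α + (-(2 + (α + 1)) + 3) = 0 by ring, rpow_zero]
  refine (mul_le_mul_of_nonneg_left (integral_mono_ae hint hG hle) (by positivity)).trans_eq ?_
  simp only [Pi.add_apply]
  rw [integral_const_mul, integral_add hi₁ hi₂, integral_const_mul, integral_const_mul, hsub,
    hscale, hscale]
  linear_combination (3 ^ (α + 1) * (∫ z, g₁ z) + 5 ^ (2 : ℝ) * ∫ z, g₂ z) * hpow
end
end

section
/- Derivative decay for exterior solutions. For every M > 0 and every integer k ≥ 1 there exists a constant c(k,M) such that: if R₀ > 0, (u,p) is a smooth solution of the steady Navier–Stokes equations on ℝ³ \ closedBall(0,R₀), and |u(x)| ≤ C*/(R₀+|x|) on ℝ³ \ closedBall(0,R₀) for some constant C* ≤ M, then |∇^k u(x)| ≤ c(k,M) C*/(R₀+|x|)^{k+1} for all x with |x| ≥ 2R₀. -/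
open MeasureTheory Real Metric Filter

noncomputable section

def pd (f : E3 → ℝ) (j : Fin 3) (x : E3) : ℝ := fderiv ℝ f x (ee j)

def pd2 (f : E3 → ℝ) (j : Fin 3) (x : E3) : ℝ :=
  fderiv ℝ (fun y => fderiv ℝ f y (ee j)) x (ee j)

/-- steady Navier–Stokes system on `s` -/
def IsNS (s : Set E3) (u : E3 → E3) (p : E3 → ℝ) : Prop :=
  (∀ x ∈ s, ∀ i, -(∑ j, pd2 (fun y => u y i) j x)
      + (∑ j, u x j * pd (fun y => u y i) j x) + pd p i x = 0)
  ∧ ∀ x ∈ s, (∑ j, pd (fun y => u y j) j x) = 0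

open scoped ContDiff Topology

theorem ContDiff.pd {f : E3 → ℝ} (hf : ContDiff ℝ ∞ f) (j : Fin 3) : ContDiff ℝ ∞ (pd f j) :=
  (hf.fderiv_right (m := ∞) (by simp)).clm_apply contDiff_const

theorem HasCompactSupport.pd {f : E3 → ℝ} (hf : HasCompactSupport f) (j : Fin 3) :
    HasCompactSupport (pd f j) :=
  hf.fderiv_apply ℝ (ee j)

theorem tsupport_pd_subset (f : E3 → ℝ) (j : Fin 3) : tsupport (pd f j) ⊆ tsupport f :=
  tsupport_fderiv_apply_subset ℝ (ee j)

theorem pd_comm {f : E3 → ℝ} (hf : ContDiff ℝ ∞ f) (i j : Fin 3) :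
    pd (pd f i) j = pd (pd f j) i := by
  have hd : Differentiable ℝ (fderiv ℝ f) :=
    (hf.fderiv_right (m := 1) (by norm_cast)).differentiable (by simp)
  have key : ∀ (a b : Fin 3) (x : E3),
      pd (pd f a) b x = fderiv ℝ (fderiv ℝ f) x (ee b) (ee a) := by
    intro a b x
    change fderiv ℝ (fun y => fderiv ℝ f y (ee a)) x (ee b) = _
    rw [fderiv_clm_apply (hd x) (differentiableAt_const _)]
    simp
  ext x
  rw [key, key]
  exact (hf.contDiffAt.isSymmSndFDerivAt (by
    simp only [minSmoothness_of_isRCLikeNormedField]; norm_cast)).eq _ _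

theorem pd_sum {ι : Type*} (s : Finset ι) {f : ι → E3 → ℝ} (hf : ∀ l ∈ s, ContDiff ℝ ∞ (f l))
    (j : Fin 3) : pd (fun x => ∑ l ∈ s, f l x) j = fun x => ∑ l ∈ s, pd (f l) j x := by
  ext x
  simp only [pd]
  rw [fderiv_fun_sum fun l hl => (hf l hl).differentiable (by simp) x]
  simp

theorem pd_sub {f g : E3 → ℝ} (hf : ContDiff ℝ ∞ f) (hg : ContDiff ℝ ∞ g) (j : Fin 3) :
    pd (fun x => f x - g x) j = fun x => pd f j x - pd g j x := by
  ext x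
  simp only [pd]
  rw [fderiv_fun_sub (hf.differentiable (by simp) x) (hg.differentiable (by simp) x)]
  simp

theorem pd_mul {f g : E3 → ℝ} (hf : ContDiff ℝ ∞ f) (hg : ContDiff ℝ ∞ g) (j : Fin 3) (x : E3) :
    pd (fun x => f x * g x) j x = f x * pd g j x + pd f j x * g x := by
  simp only [pd]
  rw [fderiv_fun_mul (hf.differentiable (by simp) x) (hg.differentiable (by simp) x)]
  simp [mul_comm]

/-- The Laplacian, as a sum of pure second partial derivatives. -/
def lap (f : E3 → ℝ) (x : E3) : ℝ := ∑ l, pd (pd f l) l x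

theorem ContDiff.lap {f : E3 → ℝ} (hf : ContDiff ℝ ∞ f) : ContDiff ℝ ∞ (lap f) :=
  ContDiff.sum fun l _ => (hf.pd l).pd l

theorem tsupport_lap_subset (f : E3 → ℝ) : tsupport (lap f) ⊆ tsupport f := by
  refine closure_minimal (fun z hz => ?_) (isClosed_tsupport f)
  by_contra hzf
  exact hz (Finset.sum_eq_zero fun l _ => image_eq_zero_of_notMem_tsupport fun h =>
    hzf (tsupport_pd_subset f l (tsupport_pd_subset _ l h)))

theorem HasCompactSupport.lap {f : E3 → ℝ} (hf : HasCompactSupport f) :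
    HasCompactSupport (lap f) :=
  hf.of_isClosed_subset (isClosed_tsupport _) (tsupport_lap_subset f)

theorem pd_lap {f : E3 → ℝ} (hf : ContDiff ℝ ∞ f) (i : Fin 3) : pd (lap f) i = lap (pd f i) := by
  have : pd (lap f) i = fun x => ∑ l, pd (pd (pd f l) l) i x :=
    pd_sum _ (fun l _ => (hf.pd l).pd l) i
  rw [this]
  ext x
  refine Finset.sum_congr rfl fun l _ => ?_
  rw [pd_comm (hf.pd l), pd_comm hf]

theorem lap_sub {f g : E3 → ℝ} (hf : ContDiff ℝ ∞ f) (hg : ContDiff ℝ ∞ g) :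
    lap (fun x => f x - g x) = fun x => lap f x - lap g x := by
  ext x
  simp only [lap, pd_sub hf hg, pd_sub (hf.pd _) (hg.pd _), Finset.sum_sub_distrib]

section Integration

variable {V : Type*} [NormedAddCommGroup V] [NormedSpace ℝ V]

theorem integrable_smul_of_hasCompactSupport {κ : E3 → ℝ} {f : E3 → V} (hκ : Continuous κ)
    (hc : HasCompactSupport κ) (hf : Continuous f) : Integrable (fun z => κ z • f z) :=
  (hκ.smul hf).integrable_of_hasCompactSupport hc.smul_right

theorem integral_smul_fderiv_eq_neg {κ : E3 → ℝ} {f : E3 → V} (hκ : ContDiff ℝ 1 κ)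
    (hc : HasCompactSupport κ) (hf : ContDiff ℝ 1 f) (v : E3) :
    ∫ z, κ z • fderiv ℝ f z v = -∫ z, fderiv ℝ κ z v • f z := by
  refine integral_smul_fderiv_eq_neg_fderiv_smul_of_integrable
    (integrable_smul_of_hasCompactSupport ?_ (hc.fderiv_apply ℝ v) hf.continuous)
    (integrable_smul_of_hasCompactSupport hκ.continuous hc ?_)
    (integrable_smul_of_hasCompactSupport hκ.continuous hc hf.continuous)
    (fun x _ => hκ.differentiable (by simp) x) (fun x _ => hf.differentiable (by simp) x)
  · exact (hκ.continuous_fderiv (by simp)).clm_apply continuous_const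
  · exact (hf.continuous_fderiv (by simp)).clm_apply continuous_const

theorem integral_mul_pd_eq_neg {κ f : E3 → ℝ} (hκ : ContDiff ℝ ∞ κ) (hc : HasCompactSupport κ)
    (hf : ContDiff ℝ ∞ f) (j : Fin 3) : ∫ z, κ z * pd f j z = -∫ z, pd κ j z * f z :=
  integral_smul_fderiv_eq_neg
    (hκ.of_le (by norm_cast)) hc (hf.of_le (by norm_cast)) (ee j)

theorem integrable_mul_of_contDiff {κ f : E3 → ℝ} (hκ : ContDiff ℝ ∞ κ) (hc : HasCompactSupport κ)
    (hf : ContDiff ℝ ∞ f) : Integrable (fun z => κ z * f z) :=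
  integrable_smul_of_hasCompactSupport hκ.continuous hc hf.continuous

end Integration

/-- The `i`-th column of `∇²ψ - Δψ • 1`, a divergence-free field for every `ψ`. -/
def solenoidal (ψ : E3 → ℝ) (i j : Fin 3) (z : E3) : ℝ :=
  pd (pd ψ i) j z - if i = j then lap ψ z else 0

section Solenoidal

variable {ψ : E3 → ℝ} (hψ : ContDiff ℝ ∞ ψ)

include hψ in
theorem contDiff_solenoidal (i j : Fin 3) : ContDiff ℝ ∞ (solenoidal ψ i j) := by
  refine ((hψ.pd i).pd j).sub ?_
  split_ifs
  · exact hψ.lap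
  · exact contDiff_const

theorem hasCompactSupport_solenoidal (hc : HasCompactSupport ψ) (i j : Fin 3) :
    HasCompactSupport (solenoidal ψ i j) := by
  refine ((hc.pd i).pd j).sub ?_
  split_ifs
  · exact hc.lap
  · exact (HasCompactSupport.zero : HasCompactSupport (0 : E3 → ℝ))

include hψ in
theorem sum_pd_solenoidal (i : Fin 3) (z : E3) : ∑ j, pd (solenoidal ψ i j) j z = 0 := by
  have h : ∀ j, pd (solenoidal ψ i j) j z
      = pd (pd (pd ψ i) j) j z - if i = j then pd (lap ψ) j z else 0 := by
    intro j
    unfold solenoidal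
    split_ifs
    · rw [pd_sub ((hψ.pd i).pd j) hψ.lap]
    · simp
  simp only [h, Finset.sum_sub_distrib, Finset.sum_ite_eq, Finset.mem_univ, if_true,
    pd_lap hψ, lap, sub_self]

include hψ in
theorem lap_solenoidal (i j : Fin 3) (z : E3) :
    lap (solenoidal ψ i j) z = pd (pd (lap ψ) i) j z - if i = j then lap (lap ψ) z else 0 := by
  unfold solenoidal
  split_ifs
  · rw [lap_sub ((hψ.pd i).pd j) hψ.lap, pd_lap hψ, pd_lap (hψ.pd i)]
  · simp only [sub_zero]
    rw [pd_lap hψ, pd_lap (hψ.pd i)]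

end Solenoidal

/-- Testing a steady Navier–Stokes flow against a divergence-free field removes the pressure. -/
theorem integral_bilaplacian_mul_eq {ψ : E3 → ℝ} (hψ : ContDiff ℝ ∞ ψ) (hc : HasCompactSupport ψ)
    {v : Fin 3 → E3 → ℝ} (hv : ∀ i, ContDiff ℝ ∞ (v i)) {P : E3 → ℝ} (hP : ContDiff ℝ ∞ P) (a : ℝ)
    (hNS : ∀ z ∈ tsupport ψ, ∀ i,
      -lap (v i) z + a * (∑ k, v k z * pd (v i) k z) + pd P i z = 0)
    (hdiv : ∀ z ∈ tsupport ψ, ∑ k, pd (v k) k z = 0) (i : Fin 3) :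
    ∫ z, lap (lap ψ) z * v i z
      = a * ∑ j, ∑ k, ∫ z, pd (solenoidal ψ i j) k z * (v j z * v k z) := by
  have hw := contDiff_solenoidal hψ i
  have hwc := hasCompactSupport_solenoidal hc i
  have hsupp : ∀ j z, z ∉ tsupport ψ → solenoidal ψ i j z = 0 := by
    intro j z hz
    have h1 : pd (pd ψ i) j z = 0 := image_eq_zero_of_notMem_tsupport fun h =>
      hz (tsupport_pd_subset _ i (tsupport_pd_subset _ j h))
    have h2 : lap ψ z = 0 := image_eq_zero_of_notMem_tsupport fun h => hz (tsupport_lap_subset _ h)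
    simp [solenoidal, h1, h2]
  have hsupp' : ∀ z, z ∉ tsupport ψ → pd (lap ψ) i z = 0 := fun z hz =>
    image_eq_zero_of_notMem_tsupport fun h => hz (tsupport_lap_subset _ (tsupport_pd_subset _ i h))
  have hpd2 : ∀ j l, ∫ z, solenoidal ψ i j z * pd (pd (v j) l) l z
      = ∫ z, pd (pd (solenoidal ψ i j) l) l z * v j z := by
    intro j l
    rw [integral_mul_pd_eq_neg (hw j) (hwc j) ((hv j).pd l),
      integral_mul_pd_eq_neg ((hw j).pd l) ((hwc j).pd l) (hv j), neg_neg]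
  have hviscous : ∑ j, ∫ z, solenoidal ψ i j z * lap (v j) z = -∫ z, lap (lap ψ) z * v i z := by
    have h1 : ∀ j, ∫ z, solenoidal ψ i j z * lap (v j) z
        = ∫ z, lap (solenoidal ψ i j) z * v j z := by
      intro j
      simp only [lap, Finset.mul_sum, Finset.sum_mul]
      rw [integral_finsetSum _ fun l _ =>
          integrable_mul_of_contDiff (hw j) (hwc j) (((hv j).pd l).pd l),
        integral_finsetSum _ fun l _ =>
          integrable_mul_of_contDiff (((hw j).pd l).pd l) (((hwc j).pd l).pd l) (hv j)]
      exact Finset.sum_congr rfl fun l _ => hpd2 j l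
    have h2 : ∀ j, ∫ z, lap (solenoidal ψ i j) z * v j z
        = -(∫ z, pd (lap ψ) i z * pd (v j) j z)
          - if i = j then ∫ z, lap (lap ψ) z * v j z else 0 := by
      intro j
      rw [integral_mul_pd_eq_neg (hψ.lap.pd i) (hc.lap.pd i) (hv j), neg_neg]
      simp only [lap_solenoidal hψ, sub_mul, ite_mul, zero_mul]
      split_ifs
      · exact integral_sub
          (integrable_mul_of_contDiff ((hψ.lap.pd i).pd j) ((hc.lap.pd i).pd j) (hv j))
          (integrable_mul_of_contDiff hψ.lap.lap hc.lap.lap (hv j))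
      · simp
    have h3 : ∑ j, ∫ z, pd (lap ψ) i z * pd (v j) j z = 0 := by
      rw [← integral_finsetSum _ fun j _ =>
        integrable_mul_of_contDiff (hψ.lap.pd i) (hc.lap.pd i) ((hv j).pd j)]
      rw [← integral_zero E3 ℝ (μ := volume)]
      congr 1
      ext z
      rw [← Finset.mul_sum]
      by_cases hz : z ∈ tsupport ψ
      · rw [hdiv z hz, mul_zero]
      · rw [hsupp' z hz, zero_mul]
    simp only [h1, h2, Finset.sum_sub_distrib, Finset.sum_neg_distrib, h3, Finset.sum_ite_eq,
      Finset.mem_univ, if_true, neg_zero, zero_sub]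
  have hconv : ∑ j, ∑ k, ∫ z, solenoidal ψ i j z * (v k z * pd (v j) k z)
      = -∑ j, ∑ k, ∫ z, pd (solenoidal ψ i j) k z * (v j z * v k z) := by
    have h1 : ∀ j k, ∫ z, solenoidal ψ i j z * (v k z * pd (v j) k z)
        = -(∫ z, pd (solenoidal ψ i j) k z * (v j z * v k z))
          - ∫ z, solenoidal ψ i j z * v j z * pd (v k) k z := by
      intro j k
      have := integral_mul_pd_eq_neg ((hw j).mul (hv k)) (hwc j).mul_right (hv j) k
      simp only [pd_mul (hw j) (hv k), add_mul] at this
      rw [integral_add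
        (by
          simpa only [mul_assoc] using integrable_mul_of_contDiff (hw j) (hwc j)
            (((hv k).pd k).mul (hv j)))
        (by
          simpa only [mul_assoc] using integrable_mul_of_contDiff ((hw j).pd k)
            ((hwc j).pd k) ((hv k).mul (hv j)))] at this
      simp only [mul_assoc] at this ⊢
      rw [this]
      simp only [mul_comm (v j _)]
      ring
    have h2 : ∀ j, ∑ k, ∫ z, solenoidal ψ i j z * v j z * pd (v k) k z = 0 := by
      intro j
      rw [← integral_finsetSum _ fun k _ =>
        integrable_mul_of_contDiff ((hw j).mul (hv j)) (hwc j).mul_right ((hv k).pd k)]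
      rw [← integral_zero E3 ℝ (μ := volume)]
      congr 1
      ext z
      rw [← Finset.mul_sum]
      by_cases hz : z ∈ tsupport ψ
      · rw [hdiv z hz, mul_zero]
      · rw [hsupp j z hz, zero_mul, zero_mul]
    simp only [h1, Finset.sum_sub_distrib, Finset.sum_neg_distrib, h2, sub_zero]
  have hpres : ∑ j, ∫ z, solenoidal ψ i j z * pd P j z = 0 := by
    simp only [integral_mul_pd_eq_neg (hw _) (hwc _) hP, Finset.sum_neg_distrib]
    rw [← integral_finsetSum _ fun j _ =>
        integrable_mul_of_contDiff ((hw j).pd j) ((hwc j).pd j) hP]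
    simp [← Finset.sum_mul, sum_pd_solenoidal hψ]
  have htest : ∀ j, -(∫ z, solenoidal ψ i j z * lap (v j) z)
      + a * (∑ k, ∫ z, solenoidal ψ i j z * (v k z * pd (v j) k z))
      + ∫ z, solenoidal ψ i j z * pd P j z = 0 := by
    intro j
    have i1 := integrable_mul_of_contDiff (hw j) (hwc j) (hv j).lap
    have i2 : ∀ k, Integrable fun z => solenoidal ψ i j z * (v k z * pd (v j) k z) := fun k =>
      integrable_mul_of_contDiff (hw j) (hwc j) ((hv k).mul ((hv j).pd k))
    have i3 := integrable_mul_of_contDiff (hw j) (hwc j) (hP.pd j)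
    have i2' : Integrable fun z => a * ∑ k, solenoidal ψ i j z * (v k z * pd (v j) k z) :=
      (integrable_finsetSum _ fun k _ => i2 k).const_mul a
    have i12 : Integrable fun z => -(solenoidal ψ i j z * lap (v j) z)
        + a * ∑ k, solenoidal ψ i j z * (v k z * pd (v j) k z) := i1.neg.add i2'
    rw [← integral_finsetSum _ fun k _ => i2 k, ← integral_const_mul, ← integral_neg,
      ← integral_add i1.fun_neg i2', ← integral_add i12 i3]
    rw [← integral_zero E3 ℝ (μ := volume)]
    congr 1
    ext z
    by_cases hz : z ∈ tsupport ψ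
    · have := hNS z hz j
      rw [← Finset.mul_sum]
      linear_combination solenoidal ψ i j z * this
    · simp [hsupp j z hz]
  have hsum := Finset.sum_congr (rfl : (Finset.univ : Finset (Fin 3)) = _) fun j _ => htest j
  simp only [Finset.sum_add_distrib, Finset.sum_neg_distrib, ← Finset.mul_sum] at hsum
  rw [hviscous, hconv, hpres] at hsum
  simp only [Finset.sum_const_zero] at hsum
  linarith

theorem contDiff_comp_norm_sq {a : ℝ → ℝ} (ha : ContDiff ℝ ∞ a) :
    ContDiff ℝ ∞ fun z : E3 => a (‖z‖ ^ 2) :=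
  ha.comp (contDiff_norm_sq ℝ)

theorem pd_comp_norm_sq {a : ℝ → ℝ} (ha : ContDiff ℝ ∞ a) (j : Fin 3) (z : E3) :
    pd (fun z => a (‖z‖ ^ 2)) j z = 2 * z j * deriv a (‖z‖ ^ 2) := by
  have h1 : HasFDerivAt (fun z : E3 => ‖z‖ ^ 2) (2 • innerSL ℝ z) z :=
    (hasStrictFDerivAt_norm_sq z).hasFDerivAt
  have h2 := ((ha.differentiable (by simp) (‖z‖ ^ 2)).hasDerivAt).comp_hasFDerivAt z h1
  change fderiv ℝ (a ∘ fun z : E3 => ‖z‖ ^ 2) z (ee j) = _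
  rw [h2.fderiv]
  simp [ee, EuclideanSpace.inner_single_right]
  ring

theorem pd_coord_mul {f : E3 → ℝ} (hf : ContDiff ℝ ∞ f) (j : Fin 3) (z : E3) :
    pd (fun z => z j * f z) j z = f z + z j * pd f j z := by
  have h0 : ContDiff ℝ ∞ fun z : E3 => z j := by fun_prop
  rw [pd_mul h0 hf]
  have : pd (fun z : E3 => z j) j z = 1 := by
    simp only [pd]
    rw [show (fun z : E3 => z j) = (EuclideanSpace.proj j : E3 →L[ℝ] ℝ) from rfl,
      ContinuousLinearMap.fderiv]
    simp [ee]
  rw [this]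
  ring

/-- The profile of the Laplacian of `z ↦ g (‖z‖ ^ 2)` on `ℝ³`. -/
def lapProfile (g : ℝ → ℝ) (s : ℝ) : ℝ := 6 * deriv g s + 4 * s * deriv (deriv g) s

theorem ContDiff.deriv_infty {g : ℝ → ℝ} (hg : ContDiff ℝ ∞ g) : ContDiff ℝ ∞ (deriv g) :=
  (contDiff_infty_iff_deriv.1 hg).2

theorem contDiff_lapProfile {g : ℝ → ℝ} (hg : ContDiff ℝ ∞ g) : ContDiff ℝ ∞ (lapProfile g) := by
  have h1 := hg.deriv_infty
  have h2 := h1.deriv_infty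
  unfold lapProfile
  fun_prop

theorem lap_comp_norm_sq {g : ℝ → ℝ} (hg : ContDiff ℝ ∞ g) :
    lap (fun z => g (‖z‖ ^ 2)) = fun z => lapProfile g (‖z‖ ^ 2) := by
  ext z
  have h1 : ∀ l, pd (fun z => g (‖z‖ ^ 2)) l
      = fun z : E3 => z l * (2 * deriv g (‖z‖ ^ 2)) := fun l => by
    ext z
    rw [pd_comp_norm_sq hg]
    ring
  have hd : ContDiff ℝ ∞ fun s => 2 * deriv g s := contDiff_const.mul hg.deriv_infty
  have h2 : ∀ l, pd (pd (fun z => g (‖z‖ ^ 2)) l) l z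
      = 2 * deriv g (‖z‖ ^ 2) + z l ^ 2 * (4 * deriv (deriv g) (‖z‖ ^ 2)) := fun l => by
    rw [h1, pd_coord_mul (contDiff_comp_norm_sq hd), pd_comp_norm_sq hd,
      deriv_const_mul _ (hg.deriv_infty.differentiable (by simp) _)]
    ring
  have h3 : ‖z‖ ^ 2 = ∑ l, z l ^ 2 := EuclideanSpace.real_norm_sq_eq z
  simp only [lap, h2, Finset.sum_add_distrib, ← Finset.sum_mul, ← h3, lapProfile]
  simp
  ring

theorem deriv_lapProfile {g : ℝ → ℝ} (hg : ContDiff ℝ ∞ g) (s : ℝ) :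
    deriv (lapProfile g) s = 10 * deriv (deriv g) s + 4 * s * deriv (deriv (deriv g)) s := by
  have h1 := (hg.deriv_infty.differentiable (by simp) s).hasDerivAt
  have h2 := (hg.deriv_infty.deriv_infty.differentiable (by simp) s).hasDerivAt
  have := (h1.const_mul 6).add (((hasDerivAt_id s).const_mul 4).mul h2)
  refine HasDerivAt.deriv (this.congr_deriv ?_)
  simp
  ring

theorem deriv_eqOn_zero_of_eqOn_zero {g : ℝ → ℝ} {c : ℝ} (hg : ∀ s, c < s → g s = 0) 
    (s : ℝ) (hs : c < s) : deriv g s = 0 := by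
  have : g =ᶠ[𝓝 s] fun _ => 0 := by
    filter_upwards [lt_mem_nhds hs] with t ht using hg t ht
  rw [this.deriv_eq, deriv_const]

theorem integral_Ioi_radial_profile {g : ℝ → ℝ} (hg : ContDiff ℝ ∞ g) (h0 : ∀ s, 1 < s → g s = 0) :
    ∫ y in Set.Ioi (0 : ℝ), y ^ 2 * (-2 * deriv (lapProfile g) (y ^ 2))
      = 4 * ∫ y in Set.Ioi (0 : ℝ), deriv g (y ^ 2) := by
  have c1 := hg.deriv_infty
  have c2 := c1.deriv_infty
  have c3 := c2.deriv_infty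
  have z1 := deriv_eqOn_zero_of_eqOn_zero h0
  have z2 := deriv_eqOn_zero_of_eqOn_zero z1
  have z3 := deriv_eqOn_zero_of_eqOn_zero z2
  have hint : ∀ F : ℝ → ℝ, Continuous F → (∀ y, 1 < y → F y = 0) →
      IntegrableOn F (Set.Ioi 0) := by
    intro F hF hF0
    have h1 : IntegrableOn F (Set.Icc 0 1) := hF.integrableOn_Icc
    have h2 : IntegrableOn F (Set.Ioi 1) :=
      integrableOn_zero.congr_fun (fun y hy => (hF0 y hy).symm) measurableSet_Ioi
    refine (h1.union h2).mono_set fun y hy => ?_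
    by_cases h : y ≤ 1
    · exact Or.inl ⟨le_of_lt hy, h⟩
    · exact Or.inr (not_le.1 h)
  have hsq : ∀ y : ℝ, 1 < y → 1 < y ^ 2 := fun y hy => by nlinarith
  set A : ℝ → ℝ := fun y => -4 * y ^ 3 * deriv (deriv g) (y ^ 2) - 4 * y * deriv g (y ^ 2) with hA
  set A' : ℝ → ℝ := fun y => y ^ 2 * (-2 * deriv (lapProfile g) (y ^ 2)) - 4 * deriv g (y ^ 2)
    with hA'
  have hderiv : ∀ y, HasDerivAt A (A' y) y := by
    intro y
    have hq : HasDerivAt (fun y : ℝ => y ^ 2) (2 * y) y := by simpa using hasDerivAt_pow 2 y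
    have hc : HasDerivAt (fun y : ℝ => y ^ 3) (3 * y ^ 2) y := by simpa using hasDerivAt_pow 3 y
    have d1 := (c1.differentiable (by simp) (y ^ 2)).hasDerivAt.comp y hq
    have d2 := (c2.differentiable (by simp) (y ^ 2)).hasDerivAt.comp y hq
    have := ((hc.const_mul (-4)).mul d2).sub (((hasDerivAt_id y).const_mul 4).mul d1)
    refine this.congr_deriv ?_
    simp only [hA', deriv_lapProfile hg, Function.comp, id]
    ring
  have cg : Continuous fun y : ℝ => 4 * deriv g (y ^ 2) := by
    have := c1.continuous
    fun_prop
  have cφ : Continuous fun y : ℝ => y ^ 2 * (-2 * deriv (lapProfile g) (y ^ 2)) := by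
    have := (contDiff_lapProfile hg).deriv_infty.continuous
    fun_prop
  have ig := hint _ cg fun y hy => by simp [z1 _ (hsq y hy)]
  have iφ := hint _ cφ fun y hy => by
    simp [deriv_lapProfile hg, z2 _ (hsq y hy), z3 _ (hsq y hy)]
  have hlim : Tendsto A atTop (𝓝 0) := by
    refine tendsto_const_nhds.congr' ?_
    filter_upwards [eventually_gt_atTop 1] with y hy
    simp [hA, z1 _ (hsq y hy), z2 _ (hsq y hy)]
  have := integral_Ioi_of_hasDerivAt_of_tendsto' (fun y _ => hderiv y) (iφ.sub ig) hlim
  rw [integral_sub iφ ig, integral_const_mul] at this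
  have hA0 : A 0 = 0 := by simp [hA]
  rw [hA0] at this
  linarith

theorem exists_profile : ∃ g : ℝ → ℝ, ContDiff ℝ ∞ g ∧ (∀ s, 1 < s → g s = 0) ∧
    ∫ y in Set.Ioi (0 : ℝ), deriv g (y ^ 2) ≠ 0 := by
  have hsm : ContDiff ℝ ∞ fun s => expNegInvGlue (1 - s) :=
    expNegInvGlue.contDiff.comp (contDiff_const.sub contDiff_id)
  refine ⟨fun s => expNegInvGlue (1 - s), hsm,
    fun s hs => expNegInvGlue.zero_of_nonpos (by linarith), ?_⟩
  have hd : ∀ s : ℝ, deriv (fun s => expNegInvGlue (1 - s)) s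
      = -((1 - s)⁻¹ ^ 2 * expNegInvGlue (1 - s)) := by
    intro s
    have h := (expNegInvGlue.hasDerivAt_polynomial_eval_inv_mul 1 (1 - s)).comp s
      ((hasDerivAt_id s).const_sub 1)
    simp at h
    rw [inv_pow]
    exact h.deriv
  have hc : Continuous fun y : ℝ => -deriv (fun s => expNegInvGlue (1 - s)) (y ^ 2) :=
    (hsm.deriv_infty.continuous.comp (continuous_pow 2)).neg
  have hneg : ∀ s, deriv (fun s => expNegInvGlue (1 - s)) s ≤ 0 := fun s => by
    rw [hd]
    have := expNegInvGlue.nonneg (1 - s)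
    simp only [Left.neg_nonpos_iff]
    positivity
  have hcs : HasCompactSupport fun y : ℝ => -deriv (fun s => expNegInvGlue (1 - s)) (y ^ 2) := by
    refine HasCompactSupport.intro (isCompact_Icc (a := -1) (b := 1)) fun y hy => ?_
    have : 1 - y ^ 2 ≤ 0 := by
      by_contra h
      exact hy (abs_le.1 (by nlinarith [sq_abs y, abs_nonneg y]))
    simp [hd, expNegInvGlue.zero_of_nonpos this]
  have hpos := hc.integral_pos_of_hasCompactSupport_nonneg_nonzero (μ := volume) (x := 0) hcs
    (fun y => neg_nonneg.2 (hneg _))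
    (by simp [hd])
  have habs := integral_comp_abs (f := fun y => -deriv (fun s => expNegInvGlue (1 - s)) (y ^ 2))
  simp only [sq_abs] at habs
  rw [habs, integral_neg] at hpos
  intro h
  simp [h] at hpos

theorem exists_kernel : ∃ ψ φ : E3 → ℝ, ContDiff ℝ ∞ ψ ∧ ContDiff ℝ ∞ φ ∧
    tsupport ψ ⊆ closedBall 0 1 ∧ tsupport φ ⊆ closedBall 0 1 ∧
    (∀ j z, pd (lap ψ) j z = -(z j * φ z)) ∧ ∫ z, φ z = 1 := by
  obtain ⟨g₀, hg₀, hz₀, hI⟩ := exists_profile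
  set I := ∫ y in Set.Ioi (0 : ℝ), deriv g₀ (y ^ 2) with hIdef
  set K : ℝ := 3 * volume.real (ball (0 : E3) 1) * 4 with hK
  have hvol : 0 < volume.real (ball (0 : E3) 1) := 
    ENNReal.toReal_pos (measure_ball_pos volume 0 one_pos).ne' measure_ball_lt_top.ne
  have hK0 : K ≠ 0 := by positivity
  set g : ℝ → ℝ := fun s => (K * I)⁻¹ * g₀ s with hgdef
  have hg : ContDiff ℝ ∞ g := contDiff_const.mul hg₀
  have hz : ∀ s, 1 < s → g s = 0 := fun s hs => by simp [hgdef, hz₀ s hs]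
  have hsupp : ∀ a : ℝ → ℝ, (∀ s, 1 < s → a s = 0) →
      tsupport (fun z : E3 => a (‖z‖ ^ 2)) ⊆ closedBall 0 1 := by
    intro a ha
    refine closure_minimal (fun z hz => ?_) isClosed_closedBall
    rw [mem_closedBall_zero_iff]
    by_contra h
    exact hz (ha _ (by nlinarith [not_le.1 h]))
  have hψ := contDiff_comp_norm_sq hg
  refine ⟨fun z => g (‖z‖ ^ 2), fun z => -2 * deriv (lapProfile g) (‖z‖ ^ 2), hψ,
    contDiff_const.mul (contDiff_comp_norm_sq (contDiff_lapProfile hg).deriv_infty),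
    hsupp g hz, hsupp (fun s => -2 * deriv (lapProfile g) s) fun s hs => ?_, fun j z => ?_, ?_⟩
  · have z2 := deriv_eqOn_zero_of_eqOn_zero (deriv_eqOn_zero_of_eqOn_zero hz)
    have z3 := deriv_eqOn_zero_of_eqOn_zero z2
    simp [deriv_lapProfile hg, z2 s hs, z3 s hs]
  · rw [lap_comp_norm_sq hg, pd_comp_norm_sq (contDiff_lapProfile hg)]
    ring
  · have h1 := integral_fun_norm_addHaar (volume : Measure E3)
      fun y => -2 * deriv (lapProfile g) (y ^ 2)
    have h2 := integral_Ioi_radial_profile hg hz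
    have h3 : ∀ s, deriv g s = (K * I)⁻¹ * deriv g₀ s := fun s =>
      deriv_const_mul _ (hg₀.differentiable (by simp) s)
    simp only [finrank_euclideanSpace, Fintype.card_fin, smul_eq_mul, nsmul_eq_mul] at h1
    rw [h1]
    norm_num at h2 ⊢
    rw [h2]
    simp only [h3, integral_const_mul, ← hIdef]
    field_simp
    rw [hK]

section Average

variable {V : Type*} [NormedAddCommGroup V] [NormedSpace ℝ V]

theorem hasFDerivAt_integral_smul {X : Type*} [NormedAddCommGroup X] [NormedSpace ℝ X]
    [ProperSpace X] {κ : E3 → ℝ} (hκ : Continuous κ) (hc : HasCompactSupport κ)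
    {F : X × E3 → V} (hF : ContDiff ℝ 1 F) (x : X) :
    HasFDerivAt (fun x => ∫ z, κ z • F (x, z))
      (∫ z, κ z • (fderiv ℝ F (x, z)).comp (ContinuousLinearMap.inl ℝ X E3)) x := by
  have hF' : Continuous fun q : X × E3 =>
      (fderiv ℝ F q).comp (ContinuousLinearMap.inl ℝ X E3) :=
    (hF.continuous_fderiv (by simp)).clm_comp continuous_const
  have hc0 : ∀ x, Continuous fun z => κ z • F (x, z) := fun x =>
    hκ.smul (hF.continuous.comp (by fun_prop))
  have hc1 : ∀ x, Continuous fun z =>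
      κ z • (fderiv ℝ F (x, z)).comp (ContinuousLinearMap.inl ℝ X E3) := fun x =>
    hκ.smul (hF'.comp (f := fun z => (x, z)) (by fun_prop))
  obtain ⟨B, hB⟩ := ((isCompact_closedBall x 1).prod hc).exists_bound_of_continuousOn
    hF'.continuousOn
  refine hasFDerivAt_integral_of_dominated_of_fderiv_le
    (bound := fun z => ‖κ z‖ * B) (ball_mem_nhds x one_pos)
    (F' := fun x z => κ z • (fderiv ℝ F (x, z)).comp (ContinuousLinearMap.inl ℝ X E3))
    (Eventually.of_forall fun x => (hc0 x).aestronglyMeasurable)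
    ((hc0 x).integrable_of_hasCompactSupport hc.smul_right)
    (hc1 x).aestronglyMeasurable
    (Eventually.of_forall fun z y hy => ?_)
    ((hκ.norm.mul continuous_const).integrable_of_hasCompactSupport hc.norm.mul_right)
    (Eventually.of_forall fun z y _ => ?_)
  · rw [norm_smul]
    by_cases hz : z ∈ tsupport κ
    · exact mul_le_mul_of_nonneg_left (hB (y, z) ⟨ball_subset_closedBall hy, hz⟩) (norm_nonneg _)
    · simp [image_eq_zero_of_notMem_tsupport hz]
  · have h1 : HasFDerivAt F (fderiv ℝ F (y, z)) (y, z) :=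
      (hF.differentiable (by simp) _).hasFDerivAt
    exact (h1.comp y (hasFDerivAt_prodMk_left y z)).const_smul (κ z)

/-- The average of `f` around `x` at scale `t` with weight `κ`. -/
def avg (κ : E3 → ℝ) (f : E3 → V) (t : ℝ) (x : E3) : V := ∫ z, κ z • f (x - t • z)

variable {κ : E3 → ℝ} (hκ : Continuous κ) (hc : HasCompactSupport κ)

include hκ hc in
theorem hasFDerivAt_avg {f : E3 → V} (hf : ContDiff ℝ 1 f) (t : ℝ) (x : E3) :
    HasFDerivAt (avg κ f t) (avg κ (fderiv ℝ f) t x) x := by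
  have hF : ContDiff ℝ 1 fun q : E3 × E3 => f (q.1 - t • q.2) := hf.comp (by fun_prop)
  refine (hasFDerivAt_integral_smul hκ hc hF x).congr_fderiv ?_
  refine integral_congr_ae (Eventually.of_forall fun z => ?_)
  have h1 : HasFDerivAt f (fderiv ℝ f (x - t • z)) (x - t • z) :=
    (hf.differentiable (by simp) _).hasFDerivAt
  have h2 := (hF.differentiable (by simp) (x, z)).hasFDerivAt.comp x
    (hasFDerivAt_prodMk_left (𝕜 := ℝ) x z)
  have h3 := h1.comp x ((hasFDerivAt_id x).sub_const (t • z))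
  simp only
  rw [h2.unique h3, ContinuousLinearMap.comp_id]

include hκ hc in
theorem hasDerivAt_avg {f : E3 → V} (hf : ContDiff ℝ 1 f) (t : ℝ) (x : E3) :
    HasDerivAt (fun t => avg κ f t x) (-∫ z, κ z • fderiv ℝ f (x - t • z) z) t := by
  have hF : ContDiff ℝ 1 fun q : ℝ × E3 => f (x - q.1 • q.2) := hf.comp (by fun_prop)
  have hF' : Continuous fun q : ℝ × E3 =>
      (fderiv ℝ (fun q : ℝ × E3 => f (x - q.1 • q.2)) q).comp (ContinuousLinearMap.inl ℝ ℝ E3) :=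
    (hF.continuous_fderiv (by simp)).clm_comp continuous_const
  refine (hasFDerivAt_integral_smul hκ hc hF t).hasDerivAt.congr_deriv ?_
  have hi : Integrable fun z => κ z •
      (fderiv ℝ (fun q : ℝ × E3 => f (x - q.1 • q.2)) (t, z)).comp
        (ContinuousLinearMap.inl ℝ ℝ E3) :=
    integrable_smul_of_hasCompactSupport hκ hc (hF'.comp (f := fun z => (t, z)) (by fun_prop))
  rw [ContinuousLinearMap.integral_apply hi, ← integral_neg]
  refine integral_congr_ae (Eventually.of_forall fun z => ?_)
  have h1 : HasFDerivAt f (fderiv ℝ f (x - t • z)) (x - t • z) :=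
    (hf.differentiable (by simp) _).hasFDerivAt
  have h2 := ((hF.differentiable (by simp) (t, z)).hasFDerivAt.comp t
    (hasFDerivAt_prodMk_left t z)).hasDerivAt
  have h3 := h1.comp_hasDerivAt t (((hasDerivAt_id t).smul_const z).const_sub x)
  have h4 := h2.unique h3
  simp only [smul_apply]
  rw [h4]
  simp

include hκ hc in
theorem iteratedFDeriv_avg {f : E3 → V} (hf : ContDiff ℝ ∞ f) (t : ℝ) (n : ℕ) :
    iteratedFDeriv ℝ n (avg κ f t) = avg κ (iteratedFDeriv ℝ n f) t := by
  induction n with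
  | zero =>
    ext1 x
    simp only [iteratedFDeriv_zero_eq_comp, avg, Function.comp]
    symm
    have := (continuousMultilinearCurryFin0 ℝ E3 V).symm.toContinuousLinearEquiv.integral_comp_comm
      (μ := volume) fun z => κ z • f (x - t • z)
    simpa using this
  | succ n ih =>
    have hn : ContDiff ℝ 1 (iteratedFDeriv ℝ n f) :=
      hf.iteratedFDeriv_right (by norm_cast; exact le_top)
    ext1 x
    rw [iteratedFDeriv_succ_eq_comp_left, iteratedFDeriv_succ_eq_comp_left, ih, Function.comp,
      (hasFDerivAt_avg hκ hc hn t x).fderiv]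
    symm
    let L : (E3 →L[ℝ] (E3 [×n]→L[ℝ] V)) ≃L[ℝ] (E3 [×(n + 1)]→L[ℝ] V) :=
      (continuousMultilinearCurryLeftEquiv ℝ (fun _ : Fin (n + 1) => E3)
        V).symm.toContinuousLinearEquiv
    have := ContinuousLinearEquiv.integral_comp_comm (𝕜 := ℝ) (E := E3 →L[ℝ] (E3 [×n]→L[ℝ] V))
      (F := E3 [×(n + 1)]→L[ℝ] V) (μ := volume) L
      fun z => κ z • fderiv ℝ (iteratedFDeriv ℝ n f) (x - t • z)
    simp only [map_smul] at this
    exact this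

include hκ hc in
theorem contDiff_avg {f : E3 → V} (hf : ContDiff ℝ ∞ f) (t : ℝ) : ContDiff ℝ ∞ (avg κ f t) := by
  refine contDiff_of_differentiable_iteratedFDeriv fun n _ => ?_
  rw [iteratedFDeriv_avg hκ hc hf]
  have hn : ContDiff ℝ 1 (iteratedFDeriv ℝ n f) :=
    hf.iteratedFDeriv_right (by norm_cast; exact le_top)
  exact fun x => (hasFDerivAt_avg hκ hc hn t x).differentiableAt

theorem smul_avg_fderiv_apply {κ : E3 → ℝ} (hκ : ContDiff ℝ 1 κ) (hc : HasCompactSupport κ)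
    {f : E3 → V} (hf : ContDiff ℝ 1 f) (t : ℝ) (x : E3) (v : E3) :
    t • avg κ (fun y => fderiv ℝ f y v) t x = avg (fun z => fderiv ℝ κ z v) f t x := by
  have hcomp : ContDiff ℝ 1 fun z => f (x - t • z) := hf.comp (by fun_prop)
  have h := integral_smul_fderiv_eq_neg hκ hc hcomp v
  have hd : ∀ z, fderiv ℝ (fun z => f (x - t • z)) z v = -(t • fderiv ℝ f (x - t • z) v) := by
    intro z
    have h1 : HasFDerivAt f (fderiv ℝ f (x - t • z)) (x - t • z) :=
      (hf.differentiable (by simp) _).hasFDerivAt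
    have h2 := h1.comp z (((hasFDerivAt_id z).const_smul t).const_sub x)
    have h3 : fderiv ℝ (fun z => f (x - t • z)) z = _ := h2.fderiv
    rw [h3]
    simp
  simp only [hd, smul_neg, integral_neg, neg_inj] at h
  simp only [avg, ← h, ← integral_smul]
  refine integral_congr_ae (Eventually.of_forall fun z => ?_)
  simp only [smul_comm t]

theorem norm_avg_le {κ : E3 → ℝ} (hκ : Continuous κ) (hs : tsupport κ ⊆ closedBall 0 1)
    {f : E3 → V} {t : ℝ} (ht : 0 ≤ t) {x : E3} {B : ℝ}
    (hB : ∀ y ∈ closedBall x t, ‖f y‖ ≤ B) : ‖avg κ f t x‖ ≤ (∫ z, ‖κ z‖) * B := by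
  have hc : HasCompactSupport κ := (isCompact_closedBall _ _).of_isClosed_subset
    (isClosed_tsupport _) hs
  rw [avg, ← integral_mul_const]
  refine norm_integral_le_of_norm_le
    ((hκ.norm.mul continuous_const).integrable_of_hasCompactSupport hc.norm.mul_right)
    (Eventually.of_forall fun z => ?_)
  rw [norm_smul]
  by_cases hz : z ∈ tsupport κ
  · refine mul_le_mul_of_nonneg_left (hB _ ?_) (norm_nonneg _)
    have := mem_closedBall_zero_iff.1 (hs hz)
    rw [mem_closedBall_iff_norm, sub_sub_cancel_left, norm_neg, norm_smul, norm_eq_abs,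
      abs_of_nonneg ht]
    nlinarith
  · simp [image_eq_zero_of_notMem_tsupport hz]

end Average

/-- `U` and `p` solve the steady Navier–Stokes system on `s`, in components. -/
def SolvesNS (s : Set E3) (U : Fin 3 → E3 → ℝ) (p : E3 → ℝ) : Prop :=
  (∀ y ∈ s, ∀ i, -lap (U i) y + (∑ k, U k y * pd (U i) k y) + pd p i y = 0) ∧
    ∀ y ∈ s, ∑ k, pd (U k) k y = 0

theorem SolvesNS.mono {s s' : Set E3} {U : Fin 3 → E3 → ℝ} {p : E3 → ℝ} (h : SolvesNS s' U p)
    (hs : s ⊆ s') : SolvesNS s U p :=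
  ⟨fun y hy => h.1 y (hs hy), fun y hy => h.2 y (hs hy)⟩

theorem hasCompactSupport_of_tsupport_subset_closedBall {κ : E3 → ℝ} {r : ℝ}
    (hs : tsupport κ ⊆ closedBall 0 r) : HasCompactSupport κ :=
  (isCompact_closedBall _ _).of_isClosed_subset (isClosed_tsupport _) hs

theorem sum_smul_ee (z : E3) : ∑ j, z j • ee j = z := by
  ext i
  simp [ee, Fin.sum_univ_three]
  fin_cases i <;> simp

theorem map_eq_sum_smul_ee {V : Type*} [NormedAddCommGroup V] [NormedSpace ℝ V] (L : E3 →L[ℝ] V)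
    (z : E3) : L z = ∑ j, z j • L (ee j) := by
  conv_lhs => rw [← sum_smul_ee z, map_sum]
  simp only [map_smul]

theorem pd_comp_sub_smul {f : E3 → ℝ} (hf : ContDiff ℝ ∞ f) (x : E3) (t : ℝ) (j : Fin 3) :
    pd (fun z => f (x - t • z)) j = fun z => -t * pd f j (x - t • z) := by
  ext z
  have h1 : HasFDerivAt f (fderiv ℝ f (x - t • z)) (x - t • z) :=
    (hf.differentiable (by simp) _).hasFDerivAt
  have h2 := h1.comp z (((hasFDerivAt_id z).const_smul t).const_sub x)
  have h3 : fderiv ℝ (fun z => f (x - t • z)) z = _ := h2.fderiv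
  rw [pd, h3]
  simp [pd]

theorem pd_const_mul {f : E3 → ℝ} (hf : ContDiff ℝ ∞ f) (a : ℝ) (j : Fin 3) (x : E3) :
    pd (fun z => a * f z) j x = a * pd f j x := by
  have : fderiv ℝ (fun z => a * f z) x = a • fderiv ℝ f x :=
    fderiv_const_mul (hf.differentiable (by simp) x) a
  rw [pd, this]
  simp [pd]

theorem lap_comp_sub_smul {f : E3 → ℝ} (hf : ContDiff ℝ ∞ f) (x : E3) (t : ℝ) (z : E3) :
    lap (fun z => f (x - t • z)) z = t ^ 2 * lap f (x - t • z) := by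
  simp only [lap, Finset.mul_sum]
  refine Finset.sum_congr rfl fun l _ => ?_
  have h1 : ContDiff ℝ ∞ fun z => pd f l (x - t • z) := (hf.pd l).comp (by fun_prop)
  rw [pd_comp_sub_smul hf, pd_const_mul h1, pd_comp_sub_smul (hf.pd l)]
  ring

theorem avg_lap_lap_eq {ψ : E3 → ℝ} (hψ : ContDiff ℝ ∞ ψ) (hs : tsupport ψ ⊆ closedBall 0 1)
    {U : Fin 3 → E3 → ℝ} (hU : ∀ i, ContDiff ℝ ∞ (U i)) {p : E3 → ℝ} (hp : ContDiff ℝ ∞ p)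
    {t : ℝ} (ht : 0 ≤ t) {x : E3} (h : SolvesNS (closedBall x t) U p) (i : Fin 3) :
    avg (lap (lap ψ)) (U i) t x =
      (-t) • ∑ j, ∑ k, avg (pd (solenoidal ψ i j) k) (fun y => U j y * U k y) t x := by
  have hmem : ∀ z ∈ tsupport ψ, x - t • z ∈ closedBall x t := fun z hz => by
    have := mem_closedBall_zero_iff.1 (hs hz)
    rw [mem_closedBall_iff_norm, sub_sub_cancel_left, norm_neg, norm_smul, norm_eq_abs,
      abs_of_nonneg ht]
    nlinarith
  have hcU : ∀ i, ContDiff ℝ ∞ fun z => U i (x - t • z) := fun i => (hU i).comp (by fun_prop)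
  have hcp : ContDiff ℝ ∞ fun z => p (x - t • z) := hp.comp (by fun_prop)
  have := integral_bilaplacian_mul_eq hψ (hasCompactSupport_of_tsupport_subset_closedBall hs) hcU
    (P := fun z => -t * p (x - t • z)) (contDiff_const.mul hcp) (-t) ?_ ?_ i
  · simpa [avg] using this
  · intro z hz i
    have h1 := h.1 _ (hmem z hz) i
    have h2 : ∑ k, U k (x - t • z) * (-t * pd (U i) k (x - t • z)) =
        -t * ∑ k, U k (x - t • z) * pd (U i) k (x - t • z) := by
      rw [Finset.mul_sum]
      exact Finset.sum_congr rfl fun k _ => by ring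
    simp only [lap_comp_sub_smul (hU i), pd_const_mul hcp, pd_comp_sub_smul (hU i),
      pd_comp_sub_smul hp, h2]
    linear_combination t ^ 2 * h1
  · intro z hz
    simp only [pd_comp_sub_smul (hU _), ← Finset.mul_sum, h.2 _ (hmem z hz), mul_zero]

section Average

variable {V : Type*} [NormedAddCommGroup V] [NormedSpace ℝ V]

theorem avg_zero_right [CompleteSpace V] {φ : E3 → ℝ} (hφ : ∫ z, φ z = 1) (f : E3 → V) (x : E3) :
    avg φ f 0 x = f x := by
  simp [avg, integral_smul_const, hφ]

theorem avg_finset_sum_left {ι : Type*} (s : Finset ι) {κ : ι → E3 → ℝ} (hκ : ∀ j, Continuous (κ j))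
    (hc : ∀ j, HasCompactSupport (κ j)) {f : E3 → V} (hf : Continuous f) (t : ℝ) (x : E3) :
    avg (fun z => ∑ j ∈ s, κ j z) f t x = ∑ j ∈ s, avg (κ j) f t x := by
  simp only [avg, Finset.sum_smul]
  exact integral_finsetSum _ fun j _ =>
    integrable_smul_of_hasCompactSupport (hκ j) (hc j) (hf.comp (by fun_prop))

theorem hasDerivAt_avg_of_pd_lap {ψ φ : E3 → ℝ} (hψ : ContDiff ℝ ∞ ψ) (hφ : ContDiff ℝ ∞ φ)
    (hψc : HasCompactSupport ψ) (hφc : HasCompactSupport φ)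
    (h : ∀ j z, pd (lap ψ) j z = -(z j * φ z)) {f : E3 → V} (hf : ContDiff ℝ 1 f) {t : ℝ}
    (ht : t ≠ 0) (x : E3) :
    HasDerivAt (fun t => avg φ f t x) (t⁻¹ • avg (lap (lap ψ)) f t x) t := by
  refine (hasDerivAt_avg hφ.continuous hφc hf t x).congr_deriv ?_
  have hpc : ∀ j, ContDiff ℝ ∞ (pd (lap ψ) j) := fun j => hψ.lap.pd j
  have hps : ∀ j, HasCompactSupport (pd (lap ψ) j) := fun j => hψc.lap.pd j
  have h1 : ∀ j, avg (pd (lap ψ) j) (fun y => fderiv ℝ f y (ee j)) t x =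
      t⁻¹ • avg (pd (pd (lap ψ) j) j) f t x := fun j => by
    rw [eq_inv_smul_iff₀ ht, smul_avg_fderiv_apply ((hpc j).of_le (by simp)) (hps j) hf]
    rfl
  have h2 : avg (lap (lap ψ)) f t x = ∑ j, avg (pd (pd (lap ψ) j) j) f t x :=
    avg_finset_sum_left _ (fun j => ((hpc j).pd j).continuous) (fun j => (hps j).pd j)
      hf.continuous t x
  have hfd : ∀ j, Continuous fun z => fderiv ℝ f (x - t • z) (ee j) := fun j =>
    ((hf.continuous_fderiv (by simp)).comp (by fun_prop : Continuous fun z => x - t • z)).clm_apply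
      continuous_const
  rw [h2, Finset.smul_sum, ← Finset.sum_congr rfl fun j _ => h1 j]
  simp only [avg]
  rw [← integral_finsetSum _ fun j _ =>
    integrable_smul_of_hasCompactSupport (hpc j).continuous (hps j) (hfd j), ← integral_neg]
  refine integral_congr_ae (Eventually.of_forall fun z => ?_)
  simp only [h]
  rw [map_eq_sum_smul_ee _ z, Finset.smul_sum, ← Finset.sum_neg_distrib]
  exact Finset.sum_congr rfl fun j _ => by rw [smul_smul, ← neg_smul, mul_comm]

end Average

theorem norm_le_sum_norm_apply_ee {V : Type*} [NormedAddCommGroup V] [NormedSpace ℝ V]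
    (L : E3 →L[ℝ] V) : ‖L‖ ≤ ∑ j, ‖L (ee j)‖ := by
  refine L.opNorm_le_bound (by positivity) fun z => ?_
  rw [map_eq_sum_smul_ee, Finset.sum_mul]
  refine (norm_sum_le _ _).trans (Finset.sum_le_sum fun j _ => ?_)
  rw [norm_smul, mul_comm]
  exact mul_le_mul_of_nonneg_left (PiLp.norm_apply_le z j) (norm_nonneg _)

theorem norm_avg_fderiv_le {V : Type*} [NormedAddCommGroup V] [NormedSpace ℝ V] [CompleteSpace V]
    {φ : E3 → ℝ} (hφ : ContDiff ℝ ∞ φ) (hs : tsupport φ ⊆ closedBall 0 1) {f : E3 → V}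
    (hf : ContDiff ℝ 1 f) {ε : ℝ} (hε : 0 < ε) {x : E3} {B : ℝ}
    (hB : ∀ y ∈ closedBall x ε, ‖f y‖ ≤ B) :
    ‖avg φ (fderiv ℝ f) ε x‖ ≤ (∑ j, ∫ z, ‖pd φ j z‖) * (B / ε) := by
  have hc := hasCompactSupport_of_tsupport_subset_closedBall hs
  rw [Finset.sum_mul]
  refine (norm_le_sum_norm_apply_ee _).trans (Finset.sum_le_sum fun j _ => ?_)
  have hi : Integrable fun z => φ z • fderiv ℝ f (x - ε • z) :=
    integrable_smul_of_hasCompactSupport hφ.continuous hc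
      ((hf.continuous_fderiv (by simp)).comp (by fun_prop : Continuous fun z => x - ε • z))
  have h1 : avg φ (fderiv ℝ f) ε x (ee j) = ε⁻¹ • avg (pd φ j) f ε x := by
    rw [eq_inv_smul_iff₀ hε.ne', avg, ContinuousLinearMap.integral_apply hi]
    exact smul_avg_fderiv_apply (hφ.of_le (by simp)) hc hf ε x (ee j)
  rw [h1, norm_smul, norm_inv, norm_of_nonneg hε.le, mul_div_assoc', div_eq_inv_mul]
  exact mul_le_mul_of_nonneg_left (norm_avg_le (hφ.pd j).continuous
    ((tsupport_pd_subset φ j).trans hs) hε.le hB) (by positivity)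

theorem norm_avg_iteratedFDeriv_succ_le {φ : E3 → ℝ} (hφ : ContDiff ℝ ∞ φ)
    (hs : tsupport φ ⊆ closedBall 0 1) {f : E3 → ℝ} (hf : ContDiff ℝ ∞ f) {ε : ℝ} (hε : 0 < ε)
    {x : E3} {m : ℕ} {B : ℝ} (hB : ∀ y ∈ closedBall x ε, ‖iteratedFDeriv ℝ m f y‖ ≤ B) :
    ‖avg φ (iteratedFDeriv ℝ (m + 1) f) ε x‖ ≤ (∑ j, ∫ z, ‖pd φ j z‖) * (B / ε) := by
  have hc := hasCompactSupport_of_tsupport_subset_closedBall hs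
  have hm : ContDiff ℝ 1 (iteratedFDeriv ℝ m f) :=
    hf.iteratedFDeriv_right (by norm_cast; exact le_top)
  rw [← iteratedFDeriv_avg hφ.continuous hc hf, ← norm_fderiv_iteratedFDeriv,
    iteratedFDeriv_avg hφ.continuous hc hf, (hasFDerivAt_avg hφ.continuous hc hm ε x).fderiv]
  exact norm_avg_fderiv_le hφ hs hm hε hB

theorem tsupport_solenoidal_subset (ψ : E3 → ℝ) (i j : Fin 3) :
    tsupport (solenoidal ψ i j) ⊆ tsupport ψ := by
  have h1 := (tsupport_pd_subset (pd ψ i) j).trans (tsupport_pd_subset ψ i)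
  refine (tsupport_sub _ _).trans (Set.union_subset h1 ?_)
  split_ifs
  · exact tsupport_lap_subset ψ
  · simp [tsupport]

theorem avg_lap_lap_iteratedFDeriv_eq {ψ : E3 → ℝ} (hψ : ContDiff ℝ ∞ ψ)
    (hs : tsupport ψ ⊆ closedBall 0 1) {U : Fin 3 → E3 → ℝ} (hU : ∀ i, ContDiff ℝ ∞ (U i))
    {p : E3 → ℝ} (hp : ContDiff ℝ ∞ p) {x₀ : E3} {r : ℝ} (h : SolvesNS (ball x₀ r) U p) {t : ℝ}
    (ht : 0 ≤ t) {x : E3} (hx : dist x x₀ + t < r) (n : ℕ) (i : Fin 3) :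
    avg (lap (lap ψ)) (iteratedFDeriv ℝ n (U i)) t x = (-t) • ∑ j, ∑ k,
      avg (pd (solenoidal ψ i j) k) (iteratedFDeriv ℝ n fun y => U j y * U k y) t x := by
  have hc := hasCompactSupport_of_tsupport_subset_closedBall hs
  have hsol : ∀ j k, ContDiff ℝ ∞ (pd (solenoidal ψ i j) k) := fun j k =>
    (contDiff_solenoidal hψ i j).pd k
  have hsolc : ∀ j k, HasCompactSupport (pd (solenoidal ψ i j) k) := fun j k =>
    (hasCompactSupport_solenoidal hc i j).pd k
  have hUU : ∀ j k, ContDiff ℝ ∞ fun y => U j y * U k y := fun j k => (hU j).mul (hU k)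
  have hA : ∀ j k, ContDiff ℝ ∞ (avg (pd (solenoidal ψ i j) k) (fun y => U j y * U k y) t) :=
    fun j k => contDiff_avg (hsol j k).continuous (hsolc j k) (hUU j k) t
  have hev : avg (lap (lap ψ)) (U i) t =ᶠ[𝓝 x]
      fun y => (-t) • ∑ j, ∑ k, avg (pd (solenoidal ψ i j) k) (fun y => U j y * U k y) t y := by
    have : ∀ᶠ y in 𝓝 x, dist y x₀ + t < r :=
      (isOpen_lt (by fun_prop) continuous_const).mem_nhds hx
    filter_upwards [this] with y hy
    rw [avg_lap_lap_eq hψ hs hU hp ht (h.mono (closedBall_subset_ball' (by linarith))) i]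
  rw [← iteratedFDeriv_avg hψ.lap.lap.continuous hc.lap.lap (hU i),
    (hev.iteratedFDeriv ℝ n).eq_of_nhds]
  have hA' : ∀ j k, ContDiff ℝ n (avg (pd (solenoidal ψ i j) k) (fun y => U j y * U k y) t) :=
    fun j k => (hA j k).of_le (by exact_mod_cast le_top)
  have hS : ∀ j, ContDiff ℝ n
      fun y => ∑ k, avg (pd (solenoidal ψ i j) k) (fun y => U j y * U k y) t y :=
    fun j => ContDiff.sum fun k _ => hA' j k
  rw [iteratedFDeriv_const_smul_apply' (ContDiff.sum fun j _ => hS j).contDiffAt,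
    iteratedFDeriv_sum (f := fun j y => ∑ k, avg (pd (solenoidal ψ i j) k)
      (fun y => U j y * U k y) t y) fun j _ => hS j, Finset.sum_apply]
  congr 1
  refine Finset.sum_congr rfl fun j _ => ?_
  rw [iteratedFDeriv_sum fun k _ => hA' j k, Finset.sum_apply]
  refine Finset.sum_congr rfl fun k _ => ?_
  rw [iteratedFDeriv_avg (hsol j k).continuous (hsolc j k) (hUU j k)]

theorem exists_norm_iteratedFDeriv_succ_le : ∃ C : ℝ, 0 < C ∧ ∀ (U : Fin 3 → E3 → ℝ) (p : E3 → ℝ),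
    (∀ i, ContDiff ℝ ∞ (U i)) → ContDiff ℝ ∞ p → ∀ (x₀ : E3) (r : ℝ), SolvesNS (ball x₀ r) U p →
    ∀ (x : E3) (ε : ℝ), 0 < ε → dist x x₀ + ε < r → ∀ (m : ℕ) (B₀ B₁ : ℝ),
    (∀ y ∈ closedBall x ε, ∀ i, ‖iteratedFDeriv ℝ m (U i) y‖ ≤ B₀) →
    (∀ y ∈ closedBall x ε, ∀ j k,
      ‖iteratedFDeriv ℝ (m + 1) (fun y => U j y * U k y) y‖ ≤ B₁) →
    ∀ i, ‖iteratedFDeriv ℝ (m + 1) (U i) x‖ ≤ C * (B₀ / ε + ε * B₁) := by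
  obtain ⟨ψ, φ, hψ, hφ, hψs, hφs, hgrad, hint⟩ := exists_kernel
  have hψc := hasCompactSupport_of_tsupport_subset_closedBall hψs
  have hφc := hasCompactSupport_of_tsupport_subset_closedBall hφs
  set C₀ : ℝ := ∑ j, ∫ z, ‖pd φ j z‖ with hC₀
  set C₁ : ℝ := ∑ i, ∑ j, ∑ k, ∫ z, ‖pd (solenoidal ψ i j) k z‖ with hC₁
  have hC₀' : 0 ≤ C₀ := by positivity
  have hC₁' : 0 ≤ C₁ := by positivity
  refine ⟨C₀ + C₁ + 1, by positivity, fun U p hU hp x₀ r hNS x ε hε hx m B₀ B₁ h₀ h₁ i => ?_⟩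
  have hB₀ : 0 ≤ B₀ := (norm_nonneg _).trans (h₀ x (mem_closedBall_self hε.le) i)
  have hB₁ : 0 ≤ B₁ := (norm_nonneg _).trans (h₁ x (mem_closedBall_self hε.le) i i)
  set W := iteratedFDeriv ℝ (m + 1) (U i) with hW
  have hWc : ContDiff ℝ 1 W := (hU i).iteratedFDeriv_right (by norm_cast; exact le_top)
  have hderiv : ∀ t ∈ Set.Ioc 0 ε, ‖t⁻¹ • avg (lap (lap ψ)) W t x‖ ≤ C₁ * B₁ := fun t ht => by
    rw [avg_lap_lap_iteratedFDeriv_eq hψ hψs hU hp hNS ht.1.le (by linarith [ht.2]), smul_smul,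
      mul_neg, inv_mul_cancel₀ ht.1.ne', neg_one_smul, norm_neg]
    calc _ ≤ ∑ j, ∑ k, (∫ z, ‖pd (solenoidal ψ i j) k z‖) * B₁ := by
          refine (norm_sum_le _ _).trans (Finset.sum_le_sum fun j _ => ?_)
          refine (norm_sum_le _ _).trans (Finset.sum_le_sum fun k _ => ?_)
          refine norm_avg_le ((contDiff_solenoidal hψ i j).pd k).continuous ?_ ht.1.le
            fun y hy => h₁ y (closedBall_subset_closedBall ht.2 hy) j k
          exact (tsupport_pd_subset _ k).trans ((tsupport_solenoidal_subset ψ i j).trans hψs)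
      _ ≤ C₁ * B₁ := by
          simp only [← Finset.sum_mul]
          refine mul_le_mul_of_nonneg_right ?_ hB₁
          exact Finset.single_le_sum (f := fun i => ∑ j, ∑ k, ∫ z, ‖pd (solenoidal ψ i j) k z‖)
            (fun i _ => by positivity) (Finset.mem_univ i)
  have hd : ∀ t ∈ Set.Ioc 0 ε, HasDerivWithinAt (fun t => avg φ W t x)
      (t⁻¹ • avg (lap (lap ψ)) W t x) (Set.Ioc 0 ε) t := fun t ht =>
    (hasDerivAt_avg_of_pd_lap hψ hφ hψc hφc hgrad hWc ht.1.ne' x).hasDerivWithinAt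
  have hdiff : ‖avg φ W ε x - avg φ W 0 x‖ ≤ C₁ * B₁ * ε := by
    have hcont : ContinuousAt (fun t => avg φ W t x) 0 :=
      (hasDerivAt_avg hφ.continuous hφc hWc 0 x).continuousAt
    have htend : Tendsto (fun t => ‖avg φ W ε x - avg φ W t x‖) (𝓝[>] 0)
        (𝓝 ‖avg φ W ε x - avg φ W 0 x‖) :=
      ((continuousAt_const.sub hcont).norm).tendsto.mono_left nhdsWithin_le_nhds
    refine le_of_tendsto htend ?_
    filter_upwards [Ioc_mem_nhdsGT hε] with t ht
    refine ((convex_Ioc 0 ε).norm_image_sub_le_of_norm_hasDerivWithin_le hd hderiv ht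
      ⟨hε, le_rfl⟩).trans (mul_le_mul_of_nonneg_left ?_ (by positivity))
    rw [norm_of_nonneg (by linarith [ht.2])]
    linarith [ht.1]
  rw [avg_zero_right hint] at hdiff
  have hav : ‖avg φ W ε x‖ ≤ C₀ * (B₀ / ε) :=
    norm_avg_iteratedFDeriv_succ_le hφ hφs (hU i) hε fun y hy => h₀ y hy i
  have hWx : ‖W x‖ ≤ ‖avg φ W ε x‖ + ‖avg φ W ε x - W x‖ := by
    simpa [norm_sub_rev, add_comm] using norm_le_norm_add_norm_sub' (W x) (avg φ W ε x)
  have : 0 ≤ B₀ / ε := by positivity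
  have : 0 ≤ ε * B₁ := by positivity
  nlinarith

theorem le_of_forall_le_div_add_mul {X : Type*} [NormedAddCommGroup X] [NormedSpace ℝ X]
    [ProperSpace X] {F : X → ℝ} (hF : Continuous F) (hF₀ : ∀ y, 0 ≤ F y)
    {x₀ : X} {R G H K K₀ : ℝ} (hR : 0 < R) (hG : 0 ≤ G) (hH : 0 ≤ H) (hK : 0 ≤ K)
    (hKR : K * R ≤ K₀)
    (h : ∀ x ε S, 0 < ε → dist x x₀ + ε ≤ R → (∀ y ∈ closedBall x ε, F y ≤ S) →
      F x ≤ G / ε + ε * (H + K * S)) {y : X} (hy : y ∈ closedBall x₀ (R / 2)) :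
    F y ≤ 4 * (4 * K₀ + 2) * G / R + 4 * R * H := by
  have hK₀ : 0 ≤ K₀ := (by positivity : 0 ≤ K * R).trans hKR
  obtain ⟨x, hx, hmax⟩ := (isCompact_closedBall x₀ R).exists_isMaxOn
    ⟨x₀, mem_closedBall_self hR.le⟩
    (f := fun y => (R - dist y x₀) * F y) (by fun_prop)
  set S := (R - dist x x₀) * F x with hS
  have hx' : dist x x₀ ≤ R := hx
  have hmax' : ∀ y, dist y x₀ ≤ R → (R - dist y x₀) * F y ≤ S := fun y hy => hmax hy
  suffices hSle : S ≤ 2 * (4 * K₀ + 2) * G + 2 * R ^ 2 * H by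
    have hy' : dist y x₀ ≤ R / 2 := hy
    have h1 := hmax' y (by linarith)
    have h2 : R / 2 * F y ≤ (R - dist y x₀) * F y :=
      mul_le_mul_of_nonneg_right (by linarith) (hF₀ y)
    have h3 : 4 * (4 * K₀ + 2) * G / R + 4 * R * H =
        (2 * (4 * K₀ + 2) * G + 2 * R ^ 2 * H) / (R / 2) := by
      field_simp
      ring
    rw [h3, le_div_iff₀ (by positivity)]
    linarith
  rcases hx'.eq_or_lt with hd | hd
  · rw [hS, hd, sub_self, zero_mul]
    positivity
  set d := R - dist x x₀ with hd'
  have hd₀ : 0 < d := sub_pos.2 hd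
  have hdR : d ≤ R := by linarith [dist_nonneg (x := x) (y := x₀)]
  set θ := (4 * K₀ + 2)⁻¹ with hθ
  have hθ₀ : 0 < θ := by positivity
  have hθK : θ * (4 * K₀ + 2) = 1 := inv_mul_cancel₀ (by positivity)
  have hθ₂ : θ ≤ 1 / 2 := by nlinarith
  have hS₀ : 0 ≤ S := mul_nonneg hd₀.le (hF₀ x)
  have hloc : ∀ y ∈ closedBall x (θ * d), F y ≤ 2 * S / d := fun y hy => by
    have h1 : dist y x ≤ θ * d := hy
    have h2 : dist y x₀ ≤ dist y x + dist x x₀ := dist_triangle _ _ _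
    have h3 : d / 2 ≤ R - dist y x₀ := by nlinarith
    have h4 := hmax' y (by linarith)
    rw [le_div_iff₀ hd₀]
    nlinarith [hF₀ y]
  have key := h x (θ * d) (2 * S / d) (by positivity) (by nlinarith) hloc
  have h5 : S ≤ d * (G / (θ * d) + θ * d * (H + K * (2 * S / d))) :=
    mul_le_mul_of_nonneg_left key hd₀.le
  have h6 : d * (G / (θ * d) + θ * d * (H + K * (2 * S / d))) =
      (4 * K₀ + 2) * G + θ * d ^ 2 * H + 2 * θ * (K * d) * S := by
    rw [show 4 * K₀ + 2 = θ⁻¹ by simp [hθ]]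
    field_simp
    ring
  have h7 : θ * d ^ 2 * H ≤ R ^ 2 * H := by
    refine mul_le_mul_of_nonneg_right ?_ hH
    nlinarith [pow_le_pow_left₀ hd₀.le hdR 2, sq_nonneg d]
  have h8 : 2 * θ * (K * d) ≤ 1 / 2 := by
    have : K * d ≤ K₀ := (mul_le_mul_of_nonneg_left hdR hK).trans hKR
    nlinarith
  nlinarith [mul_le_mul_of_nonneg_right h8 hS₀]

theorem norm_iteratedFDeriv_mul_le_of_le {f g : E3 → ℝ} (hf : ContDiff ℝ ∞ f)
    (hg : ContDiff ℝ ∞ g) {y : E3} {n : ℕ} {a r S : ℝ} (ha : 0 ≤ a) (hr : 0 < r) (hS : 0 ≤ S)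
    (hfj : ∀ j < n + 1, ‖iteratedFDeriv ℝ j f y‖ ≤ a / r ^ (j + 1))
    (hgj : ∀ j < n + 1, ‖iteratedFDeriv ℝ j g y‖ ≤ a / r ^ (j + 1))
    (hfS : ‖iteratedFDeriv ℝ (n + 1) f y‖ ≤ S) (hgS : ‖iteratedFDeriv ℝ (n + 1) g y‖ ≤ S) :
    ‖iteratedFDeriv ℝ (n + 1) (fun y => f y * g y) y‖ ≤
      2 ^ (n + 1) * (a / r * S + a ^ 2 / r ^ (n + 3)) := by
  refine (norm_iteratedFDeriv_mul_le (N := ∞) hf hg y (by exact_mod_cast le_top)).trans ?_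
  have hsum : (2 : ℝ) ^ (n + 1) = ∑ i ∈ Finset.range (n + 1 + 1), ((n + 1).choose i : ℝ) := by
    exact_mod_cast (Nat.sum_range_choose (n + 1)).symm
  rw [hsum, Finset.sum_mul]
  refine Finset.sum_le_sum fun i hi => ?_
  rw [mul_assoc]
  refine mul_le_mul_of_nonneg_left ?_ (by positivity)
  have hi' : i ≤ n + 1 := Nat.lt_succ_iff.1 (Finset.mem_range.1 hi)
  have h1 : 0 ≤ a / r * S := by positivity
  have h2 : 0 ≤ a ^ 2 / r ^ (n + 3) := by positivity
  rcases Nat.eq_zero_or_pos i with rfl | hi₀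
  · have := mul_le_mul (hfj 0 (by omega)) hgS (norm_nonneg _) (by positivity)
    simp only [zero_add, pow_one, Nat.sub_zero] at this ⊢
    linarith
  rcases hi'.eq_or_lt with rfl | hi₁
  · have := mul_le_mul hfS (hgj 0 (by omega)) (norm_nonneg _) hS
    rw [show n + 1 - (n + 1) = 0 by omega]
    simp only [zero_add, pow_one] at this
    linarith
  · have := mul_le_mul (hfj i hi₁) (hgj (n + 1 - i) (by omega)) (norm_nonneg _) (by positivity)
    rw [div_mul_div_comm, ← pow_add, ← sq, show i + 1 + (n + 1 - i + 1) = n + 3 by omega] at this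
    linarith

theorem exists_norm_iteratedFDeriv_le {M : ℝ} (hM : 0 < M) (k : ℕ) : ∃ c : ℝ, 1 ≤ c ∧
    ∀ (U : Fin 3 → E3 → ℝ) (p : E3 → ℝ), (∀ i, ContDiff ℝ ∞ (U i)) → ContDiff ℝ ∞ p →
    ∀ (x₀ : E3) (r A : ℝ), 0 < r → 0 ≤ A → A ≤ M → SolvesNS (ball x₀ r) U p →
    (∀ y ∈ ball x₀ r, ∀ i, |U i y| ≤ A / r) →
    ∀ j ≤ k, ∀ y ∈ closedBall x₀ (r / 2 ^ (k + 1)), ∀ i,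
      ‖iteratedFDeriv ℝ j (U i) y‖ ≤ c * A / r ^ (j + 1) := by
  induction k with
  | zero =>
    refine ⟨1, le_rfl, fun U p _ _ x₀ r A hr _ _ _ hUA j hj y hy i => ?_⟩
    obtain rfl : j = 0 := by omega
    have hy' : y ∈ ball x₀ r := closedBall_subset_ball (by simpa using hr) hy
    simpa using hUA y hy' i
  | succ k ih =>
    obtain ⟨c, hc, ih⟩ := ih
    obtain ⟨C, hC, hone⟩ := exists_norm_iteratedFDeriv_succ_le
    set K₀ := 3 * C * 2 ^ (k + 1) * c * M with hK₀
    set c' := 4 * (4 * K₀ + 2) * (3 * C * c) * 2 ^ (k + 1) + 4 * (3 * C * 2 ^ (k + 1) * c ^ 2 * M)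
      with hc'
    have hK₀' : 0 ≤ K₀ := by positivity
    have hc'₀ : 0 ≤ c' := by positivity
    refine ⟨c + c', by linarith, fun U p hU hp x₀ r A hr hA hAM hNS hUA j hj y hy i => ?_⟩
    have ih' := ih U p hU hp x₀ r A hr hA hAM hNS hUA
    set R := r / 2 ^ (k + 1) with hR
    have hR₀ : 0 < R := by positivity
    have hRr : R < r := div_lt_self hr (one_lt_pow₀ one_lt_two (by omega))
    have hR₂ : r / 2 ^ (k + 1 + 1) = R / 2 := by
      rw [hR, pow_succ, div_mul_eq_div_div]
    rw [hR₂] at hy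
    have hle : c * A / r ^ (j + 1) ≤ (c + c') * A / r ^ (j + 1) := by gcongr; linarith
    rcases hj.eq_or_lt with rfl | hj'
    swap
    · exact (ih' j (by omega) y (closedBall_subset_closedBall (by linarith) hy) i).trans hle
    have hcont : ∀ i, Continuous fun y => iteratedFDeriv ℝ (k + 1) (U i) y := fun i =>
      (hU i).continuous_iteratedFDeriv (by exact_mod_cast le_top)
    have key := le_of_forall_le_div_add_mul (F := fun y => ∑ i, ‖iteratedFDeriv ℝ (k + 1) (U i) y‖)
      (by fun_prop) (fun y => by positivity) hR₀ (x₀ := x₀)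
      (G := 3 * C * (c * A / r ^ (k + 1)))
      (H := 3 * C * (2 ^ (k + 1) * ((c * A) ^ 2 / r ^ (k + 3))))
      (K := 3 * C * (2 ^ (k + 1) * (c * A / r))) (K₀ := K₀) (by positivity) (by positivity)
      (by positivity) ?_ ?_ hy
    · refine (Finset.single_le_sum (f := fun i => ‖iteratedFDeriv ℝ (k + 1) (U i) y‖)
        (fun i _ => by positivity) (Finset.mem_univ i)).trans (key.trans ?_)
      have h1 : 4 * (4 * K₀ + 2) * (3 * C * (c * A / r ^ (k + 1))) / R =
          4 * (4 * K₀ + 2) * (3 * C * c) * 2 ^ (k + 1) * A / r ^ (k + 1 + 1) := by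
        rw [hR, pow_succ r (k + 1)]
        field_simp
      have h2 : 4 * R * (3 * C * (2 ^ (k + 1) * ((c * A) ^ 2 / r ^ (k + 3)))) ≤
          4 * (3 * C * 2 ^ (k + 1) * c ^ 2 * M) * A / r ^ (k + 1 + 1) := by
        calc _ ≤ 4 * r * (3 * C * (2 ^ (k + 1) * (c ^ 2 * (M * A) / r ^ (k + 3)))) := by
              have : (c * A) ^ 2 ≤ c ^ 2 * (M * A) := by
                rw [mul_pow, sq A]
                gcongr
              gcongr
          _ = _ := by
              rw [pow_succ r (k + 2)]
              field_simp
      have h3 : (c + c') * A / r ^ (k + 1 + 1) = c * A / r ^ (k + 1 + 1) +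
          (4 * (4 * K₀ + 2) * (3 * C * c) * 2 ^ (k + 1) * A / r ^ (k + 1 + 1) +
          4 * (3 * C * 2 ^ (k + 1) * c ^ 2 * M) * A / r ^ (k + 1 + 1)) := by
        rw [hc']
        ring
      have h4 : 0 ≤ c * A / r ^ (k + 1 + 1) := by positivity
      rw [h1, h3]
      linarith
    · calc _ ≤ 3 * C * (2 ^ (k + 1) * (c * M / r)) * r := by gcongr
        _ = K₀ := by
            rw [hK₀]
            field_simp
    · intro x ε S hε hx hS
      have hsub : closedBall x ε ⊆ closedBall x₀ R := closedBall_subset_closedBall' (by linarith)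
      have hS' : ∀ y ∈ closedBall x ε, ∀ i, ‖iteratedFDeriv ℝ (k + 1) (U i) y‖ ≤ S :=
        fun y hy i => (Finset.single_le_sum (f := fun i => ‖iteratedFDeriv ℝ (k + 1) (U i) y‖)
          (fun i _ => by positivity) (Finset.mem_univ i)).trans (hS y hy)
      have hS₀ : 0 ≤ S := (norm_nonneg _).trans (hS' x (mem_closedBall_self hε.le) i)
      have := hone U p hU hp x₀ r hNS x ε hε (by linarith) k (c * A / r ^ (k + 1))
        (2 ^ (k + 1) * (c * A / r * S + (c * A) ^ 2 / r ^ (k + 3)))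
        (fun y hy i => ih' k le_rfl y (hsub hy) i)
        (fun y hy j l => norm_iteratedFDeriv_mul_le_of_le (hU j) (hU l) (by positivity) hr hS₀
          (fun n hn => ih' n (by omega) y (hsub hy) j) (fun n hn => ih' n (by omega) y (hsub hy) l)
          (hS' y hy j) (hS' y hy l))
      refine (Finset.sum_le_sum fun i _ => this i).trans (le_of_eq ?_)
      simp only [Finset.sum_const, Finset.card_univ, Fintype.card_fin, nsmul_eq_mul]
      push_cast
      ring

theorem exists_contDiff_eqOn_ball {f : E3 → ℝ} {s : Set E3} (hs : IsOpen s)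
    (hf : ContDiffOn ℝ ∞ f s) {x : E3} {r R : ℝ} (hr : 0 < r) (hrR : r < R)
    (hR : closedBall x R ⊆ s) : ∃ g : E3 → ℝ, ContDiff ℝ ∞ g ∧ Set.EqOn g f (ball x r) := by
  let χ : ContDiffBump x := ⟨r, R, hr, hrR⟩
  refine ⟨fun y => χ y * f y, contDiff_iff_contDiffAt.2 fun y => ?_, fun y hy => ?_⟩
  · by_cases hy : y ∈ closedBall x R
    · exact χ.contDiff.contDiffAt.mul (hf.contDiffAt (hs.mem_nhds (hR hy)))
    · refine (contDiffAt_const (c := 0)).congr_of_eventuallyEq ?_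
      rw [show closedBall x R = tsupport χ from χ.tsupport_eq.symm,
        notMem_tsupport_iff_eventuallyEq] at hy
      filter_upwards [hy] with z hz
      simp [hz]
  · simp only [χ.one_of_mem_closedBall (ball_subset_closedBall hy), one_mul]

theorem pd_eqOn {f g : E3 → ℝ} {s : Set E3} (hs : IsOpen s) (h : Set.EqOn g f s) (j : Fin 3) :
    Set.EqOn (pd g j) (pd f j) s := fun y hy => by
  rw [pd, pd, (h.eventuallyEq_of_mem (hs.mem_nhds hy)).fderiv_eq]

theorem norm_iteratedFDeriv_le_sum {u : E3 → E3} {U : Fin 3 → E3 → ℝ} {x : E3}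
    (hU : ∀ i, ContDiff ℝ ∞ (U i)) (h : ∀ᶠ y in 𝓝 x, ∀ i, U i y = u y i) (k : ℕ) :
    ‖iteratedFDeriv ℝ k u x‖ ≤ ∑ i, ‖iteratedFDeriv ℝ k (U i) x‖ := by
  let L : Fin 3 → ℝ →L[ℝ] E3 := fun i => ContinuousLinearMap.toSpanSingleton ℝ (ee i)
  have hU' : ∀ i, ContDiff ℝ k (U i) := fun i => (hU i).of_le (by exact_mod_cast le_top)
  have hev : u =ᶠ[𝓝 x] fun y => ∑ i, (L i ∘ U i) y := by
    filter_upwards [h] with y hy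
    rw [← sum_smul_ee (u y)]
    simp [L, hy]
  rw [(hev.iteratedFDeriv ℝ k).eq_of_nhds,
    iteratedFDeriv_sum fun i _ => (L i).contDiff.comp (hU' i), Finset.sum_apply]
  refine (norm_sum_le _ _).trans (Finset.sum_le_sum fun i _ => ?_)
  refine ((L i).norm_iteratedFDeriv_comp_left (hU' i).contDiffAt le_rfl).trans ?_
  simp [L, ContinuousLinearMap.norm_toSpanSingleton, ee]

theorem IsNS.exists_solvesNS {s : Set E3} {u : E3 → E3} {p : E3 → ℝ} (h : IsNS s u p)
    (hs : IsOpen s) (hu : ContDiffOn ℝ ∞ u s) (hp : ContDiffOn ℝ ∞ p s) {x : E3} {r R : ℝ}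
    (hr : 0 < r) (hrR : r < R) (hR : closedBall x R ⊆ s) :
    ∃ (U : Fin 3 → E3 → ℝ) (P : E3 → ℝ), (∀ i, ContDiff ℝ ∞ (U i)) ∧ ContDiff ℝ ∞ P ∧
      (∀ y ∈ ball x r, ∀ i, U i y = u y i) ∧ SolvesNS (ball x r) U P := by
  choose U hU hUu using fun i => exists_contDiff_eqOn_ball hs (contDiffOn_euclidean.1 hu i)
    hr hrR hR
  obtain ⟨P, hP, hPp⟩ := exists_contDiff_eqOn_ball hs hp hr hrR hR
  have hsub : ball x r ⊆ s :=
    (ball_subset_closedBall.trans (closedBall_subset_closedBall hrR.le)).trans hR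
  have h1 := fun i j => pd_eqOn isOpen_ball (hUu i) j
  have h2 := fun i j => pd_eqOn isOpen_ball (h1 i j) j
  refine ⟨U, P, hU, hP, fun y hy i => hUu i hy, fun y hy i => ?_, fun y hy => ?_⟩
  · have := h.1 y (hsub hy) i
    simp only [lap, h2 i _ hy, hUu _ hy, h1 i _ hy, pd_eqOn isOpen_ball hPp i hy]
    exact this
  · simp only [h1 _ _ hy]
    exact h.2 y (hsub hy)

theorem derivative_decay_exterior (M : ℝ) (hM : 0 < M) (k : ℕ) (hk : 1 ≤ k) :
    ∃ c : ℝ, ∀ R₀ : ℝ, 0 < R₀ → ∀ (u : E3 → E3) (p : E3 → ℝ) (Cstar : ℝ),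
      ContDiffOn ℝ (⊤ : ℕ∞) u (closedBall (0 : E3) R₀)ᶜ →
      ContDiffOn ℝ (⊤ : ℕ∞) p (closedBall (0 : E3) R₀)ᶜ →
      IsNS (closedBall (0 : E3) R₀)ᶜ u p →
      (∀ x ∈ (closedBall (0 : E3) R₀)ᶜ, ‖u x‖ ≤ Cstar / (R₀ + ‖x‖)) →
      Cstar ≤ M →
      ∀ x : E3, 2 * R₀ ≤ ‖x‖ →
        ‖iteratedFDeriv ℝ k u x‖ ≤ c * Cstar / (R₀ + ‖x‖) ^ (k + 1) := by
  obtain ⟨c, hc, hest⟩ := exists_norm_iteratedFDeriv_le hM k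
  refine ⟨3 * (c * 6 ^ (k + 1)), fun R₀ hR₀ u p Cstar hu hp hNS hdec hCM x hx => ?_⟩
  have hx₀ : 0 < ‖x‖ := by linarith
  have hmem : ∀ y ∈ closedBall x (‖x‖ / 3), 2 / 3 * ‖x‖ ≤ ‖y‖ := fun y hy => by
    have h1 : ‖y - x‖ ≤ ‖x‖ / 3 := mem_closedBall_iff_norm.1 hy
    have h2 := norm_le_norm_add_norm_sub y x
    linarith
  have hsub : closedBall x (‖x‖ / 3) ⊆ (closedBall (0 : E3) R₀)ᶜ := fun y hy => by
    have := hmem y hy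
    rw [Set.mem_compl_iff, mem_closedBall_zero_iff, not_le]
    linarith
  obtain ⟨U, P, hU, hP, hUu, hNS'⟩ := hNS.exists_solvesNS isClosed_closedBall.isOpen_compl hu hp
    (by positivity : 0 < ‖x‖ / 4) (by linarith : ‖x‖ / 4 < ‖x‖ / 3) hsub
  have hball : ball x (‖x‖ / 4) ⊆ closedBall x (‖x‖ / 3) :=
    ball_subset_closedBall.trans (closedBall_subset_closedBall (by linarith))
  have hC : 0 ≤ Cstar := by
    have := (norm_nonneg _).trans (hdec x (hsub (mem_closedBall_self (by positivity))))
    by_contra! hneg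
    exact this.not_gt (div_neg_of_neg_of_pos hneg (by positivity))
  have hUle : ∀ y ∈ ball x (‖x‖ / 4), ∀ i, |U i y| ≤ Cstar / (‖x‖ / 4) := fun y hy i => by
    rw [hUu y hy i]
    refine ((PiLp.norm_apply_le (u y) i).trans (hdec y (hsub (hball hy)))).trans ?_
    have := hmem y (hball hy)
    gcongr
    linarith
  have hbound := fun i => hest U P hU hP x (‖x‖ / 4) Cstar (by positivity) hC hCM hNS' hUle k
    le_rfl x (mem_closedBall_self (by positivity)) i
  have hUu' : ∀ᶠ y in 𝓝 x, ∀ i, U i y = u y i := by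
    filter_upwards [ball_mem_nhds x (by positivity : 0 < ‖x‖ / 4)] with y hy using hUu y hy
  calc _ ≤ ∑ i, ‖iteratedFDeriv ℝ k (U i) x‖ := norm_iteratedFDeriv_le_sum hU hUu' k
    _ ≤ ∑ _i : Fin 3, c * Cstar / (‖x‖ / 4) ^ (k + 1) := Finset.sum_le_sum fun i _ => hbound i
    _ ≤ ∑ _i : Fin 3, c * Cstar / ((R₀ + ‖x‖) / 6) ^ (k + 1) := by
        refine Finset.sum_le_sum fun i _ => ?_
        have : (R₀ + ‖x‖) / 6 ≤ ‖x‖ / 4 := by linarith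
        gcongr
    _ = _ := by
        simp only [Finset.sum_const, Finset.card_univ, Fintype.card_fin, nsmul_eq_mul, div_pow]
        field_simp
        ring
end
end
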